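/- arXiv:0810.4766 — 4 statements merged into one kernel-verified Lean document; each statement's English description precedes it below -/
import Mathlib

section
/- For every integer k ≥ 2, the subspace φ(H_{k−1}) ⊆ ℝ[x₁,…,xₙ]ⁿ is irreducible under the o(n,ℝ)-action: it is invariant under all the operators L_{r,s} (1 ≤ r < s ≤ n), and its only L_{r,s}-invariant ℝ-subspaces are {0} and φ(H_{k−1}) itself. -/
open MvPolynomial

/-- The Laplacian `Δ = ∑ᵣ ∂²_{xᵣ}` on `ℝ[x₁,…,xₙ]`. -/
noncomputable def lap {n : ℕ} (p : MvPolynomial (Fin n) ℝ) : MvPolynomial (Fin n) ℝ :=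
  ∑ r : Fin n, pderiv r (pderiv r p)

/-- `φ = φ₁ + c·φ₂` with
`φ₁(f) = (k−1)[(∑ᵣ xᵣ²)·ψ(f) − (2k+n−4)·f·(x₁,…,xₙ)]`,
`φ₂(f) = (∑ᵣ xᵣ²)·ψ(f)`, where `ψ` is the gradient map, and
`c = (2k+n−2)(k+n−3)(k−1) / (2(b⁻¹(2k+n−4)+k−1))`. -/
noncomputable def phiMap {n : ℕ} (b : ℝ) (k : ℕ) (f : MvPolynomial (Fin n) ℝ) :
    Fin n → MvPolynomial (Fin n) ℝ :=
  fun j =>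
    ((k : ℝ) - 1) • ((∑ r : Fin n, X r ^ 2) * pderiv j f
        - (2 * (k : ℝ) + n - 4) • (f * X j))
    + ((2 * (k : ℝ) + n - 2) * ((k : ℝ) + n - 3) * ((k : ℝ) - 1) /
          (2 * (b⁻¹ * (2 * (k : ℝ) + n - 4) + (k : ℝ) - 1))) •
        ((∑ r : Fin n, X r ^ 2) * pderiv j f)

/-- The set `φ(H_{k-1})`. -/
def phiH (n : ℕ) (b : ℝ) (k : ℕ) : Set (Fin n → MvPolynomial (Fin n) ℝ) :=
  {z | ∃ f : MvPolynomial (Fin n) ℝ,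
    f.IsHomogeneous (k - 1) ∧ lap f = 0 ∧ z = phiMap b k f}

/-- The `o(n,ℝ)`-action on tuples:
`L_{r,s}(u) = (x_r∂_{x_s} − x_s∂_{x_r})(u) + u_s ς_r − u_r ς_s`. -/
noncomputable def Lop {n : ℕ} (r s : Fin n) (u : Fin n → MvPolynomial (Fin n) ℝ) :
    Fin n → MvPolynomial (Fin n) ℝ :=
  fun j => (X r * pderiv s (u j) - X s * pderiv r (u j))
    + (if j = r then u s else 0) - (if j = s then u r else 0)

/-! The Fischer product on `MvPolynomial σ K`, given by `⟨x^α, g⟩ = α! g_α`, makes `x_r` adjoint to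
`∂_r`, so the rotations `x_r ∂_s - x_s ∂_r` are skew. Fix a pole `e_o`. A rotation-stable space of
homogeneous polynomials vanishing at `e_o` is zero, so every nonzero stable space `U` of harmonic
polynomials of degree `m` contains a zonal polynomial that is nonzero at `e_o`: the Riesz
representative of evaluation there. A zonal harmonic polynomial which, like this one, has zero
tangential gradient at the pole is determined by its value there. Hence the representative `z` of
evaluation on all harmonic polynomials of degree `m` lies in `U`; those orthogonal to `U` are
orthogonal to `z`, that is, they vanish at `e_o`, and so they form the zero space.

Since `φ` intertwines the rotations with the operators `L_{r,s}`, irreducibility passes to the image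
of `φ`. -/

section Derivatives

variable {σ R : Type*} [CommSemiring R]

lemma pderiv_comm (i j : σ) (f : MvPolynomial σ R) :
    pderiv i (pderiv j f) = pderiv j (pderiv i f) := by
  rcases eq_or_ne i j with rfl | hij
  · rfl
  · ext α
    simp only [coeff_pderiv, Finsupp.add_apply, Finsupp.single_eq_of_ne hij,
      Finsupp.single_eq_of_ne hij.symm, add_right_comm α (Finsupp.single i 1), add_zero]
    ring

lemma eq_zero_of_isHomogeneous_zero {f : MvPolynomial σ R} (hf : f.IsHomogeneous 0) {x : σ → R}
    (hx : eval x f = 0) : f = 0 := by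
  rw [← totalDegree_zero_iff_isHomogeneous, totalDegree_eq_zero_iff_eq_C] at hf
  rw [hf, eval_C] at hx
  rw [hf, hx, C_0]

lemma isHomogeneous_X_mul_pderiv {m : ℕ} {f : MvPolynomial σ R} (hf : f.IsHomogeneous m)
    (i j : σ) : (X i * pderiv j f).IsHomogeneous m := by
  obtain _ | m := m
  · rw [← totalDegree_zero_iff_isHomogeneous, totalDegree_eq_zero_iff_eq_C] at hf
    rw [hf, pderiv_C, mul_zero]
    exact isHomogeneous_zero _ _ _
  · simpa [add_comm] using (isHomogeneous_X R i).mul (hf.pderiv (i := j))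

lemma eq_zero_of_pderiv_eq_zero [Finite σ] [NoZeroDivisors R] [CharZero R] {m : ℕ}
    (hm : m ≠ 0) {f : MvPolynomial σ R} (hf : f.IsHomogeneous m) (h : ∀ i, pderiv i f = 0) :
    f = 0 := by
  cases nonempty_fintype σ
  have euler := hf.sum_X_mul_pderiv
  simp only [h, mul_zero, Finset.sum_const_zero, nsmul_eq_mul] at euler
  exact (mul_eq_zero.1 euler.symm).resolve_left (Nat.cast_ne_zero.2 hm)

lemma eval_single_pderiv_self [Finite σ] [DecidableEq σ] {m : ℕ} {f : MvPolynomial σ R}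
    (hf : f.IsHomogeneous m) (o : σ) :
    eval (Pi.single o 1) (pderiv o f) = m * eval (Pi.single o 1) f := by
  cases nonempty_fintype σ
  simpa [Pi.single_apply] using congrArg (eval (Pi.single o 1)) hf.sum_X_mul_pderiv

variable [Fintype σ]

variable (σ R) in
/-- The Laplacian `∑ᵢ ∂ᵢ²` as a linear endomorphism of the polynomial ring. -/
noncomputable def laplacian : MvPolynomial σ R →ₗ[R] MvPolynomial σ R :=
  ∑ i, (pderiv i).toLinearMap ∘ₗ (pderiv i).toLinearMap

lemma laplacian_apply (f : MvPolynomial σ R) :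
    laplacian σ R f = ∑ i, pderiv i (pderiv i f) := by
  simp [laplacian]

lemma laplacian_pderiv (i : σ) (f : MvPolynomial σ R) :
    laplacian σ R (pderiv i f) = pderiv i (laplacian σ R f) := by
  simp only [laplacian_apply, map_sum, pderiv_comm i]

end Derivatives

section Rotations

variable {σ R : Type*} [CommRing R]

/-- The infinitesimal rotation `x_r ∂_s - x_s ∂_r`, the action on polynomials of a generator of
the orthogonal Lie algebra. -/
noncomputable def rot (r s : σ) : Derivation R (MvPolynomial σ R) (MvPolynomial σ R) :=
  (X r : MvPolynomial σ R) • pderiv s - (X s : MvPolynomial σ R) • pderiv r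

lemma rot_apply (r s : σ) (f : MvPolynomial σ R) :
    rot r s f = X r * pderiv s f - X s * pderiv r f := rfl

lemma rot_self (r : σ) (f : MvPolynomial σ R) : rot r r f = 0 := sub_self _

lemma rot_swap (r s : σ) (f : MvPolynomial σ R) : rot s r f = -rot r s f := (neg_sub _ _).symm

lemma isHomogeneous_rot {m : ℕ} {f : MvPolynomial σ R} (hf : f.IsHomogeneous m) (r s : σ) :
    (rot r s f).IsHomogeneous m :=
  (isHomogeneous_X_mul_pderiv hf r s).sub (isHomogeneous_X_mul_pderiv hf s r)

lemma pderiv_rot [DecidableEq σ] (r s j : σ) (f : MvPolynomial σ R) :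
    pderiv j (rot r s f) = rot r s (pderiv j f)
      + (if j = r then pderiv s f else 0) - (if j = s then pderiv r f else 0) := by
  simp only [rot_apply, map_sub, pderiv_mul, pderiv_X, Pi.single_apply, pderiv_comm j,
    eq_comm (a := j), ite_mul, one_mul, zero_mul]
  ring

lemma rot_X [DecidableEq σ] (r s j : σ) :
    rot r s (X j : MvPolynomial σ R) = (if j = s then X r else 0) - (if j = r then X s else 0) := by
  simp [rot_apply, pderiv_X, Pi.single_apply]

lemma eval_single_rot [DecidableEq σ] {o r : σ} (hr : r ≠ o) (f : MvPolynomial σ R) :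
    eval (Pi.single o 1) (rot o r f) = eval (Pi.single o 1) (pderiv r f) := by
  simp [rot_apply, hr]

variable [Fintype σ]

lemma rot_sum_X_sq (r s : σ) : rot r s (∑ i, X i ^ 2 : MvPolynomial σ R) = 0 := by
  classical
  simp only [map_sum, Derivation.leibniz_pow, rot_X, smul_sub, smul_ite, smul_zero,
    Finset.sum_sub_distrib, Finset.sum_ite_eq', Finset.mem_univ, if_true]
  simp [mul_comm]

lemma laplacian_rot (r s : σ) (f : MvPolynomial σ R) :
    laplacian σ R (rot r s f) = rot r s (laplacian σ R f) := by
  classical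
  simp only [laplacian_apply, pderiv_rot, map_add, map_sub, map_sum, apply_ite (pderiv _),
    map_zero, Finset.sum_add_distrib, Finset.sum_sub_distrib, Finset.sum_ite_eq',
    Finset.mem_univ, if_true, pderiv_comm r s]
  ring

lemma sum_pderiv_rot {m : ℕ} {f : MvPolynomial σ R} (hf : f.IsHomogeneous (m + 1)) (r : σ) :
    ∑ s, pderiv s (rot r s f) =
      X r * laplacian σ R f - ((Fintype.card σ : R) + m - 1) • pderiv r f := by
  classical
  have euler : ∑ s, X s * pderiv s (pderiv r f) = m • pderiv r f := hf.pderiv.sum_X_mul_pderiv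
  have hterm (s : σ) : pderiv s (rot r s f) = X r * pderiv s (pderiv s f)
      - X s * pderiv s (pderiv r f) + (if s = r then pderiv s f else 0) - pderiv r f := by
    rw [pderiv_rot, rot_apply, if_pos rfl, pderiv_comm r s]
  simp only [hterm, laplacian_apply, Finset.sum_add_distrib, Finset.sum_sub_distrib, euler,
    ← Finset.mul_sum, Finset.sum_ite_eq', Finset.mem_univ, if_true, Finset.sum_const,
    Finset.card_univ]
  module

end Rotations

section RotStable

variable {σ R : Type*} [CommRing R]

/-- The subspaces of the polynomial ring that are stable under the orthogonal Lie algebra. -/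
def IsRotStable (U : Submodule R (MvPolynomial σ R)) : Prop :=
  ∀ r s, ∀ f ∈ U, rot r s f ∈ U

lemma IsRotStable.of_lt [LinearOrder σ] {U : Submodule R (MvPolynomial σ R)}
    (hU : ∀ r s, r < s → ∀ f ∈ U, rot r s f ∈ U) : IsRotStable U := by
  intro r s f hf
  rcases lt_trichotomy r s with hrs | rfl | hsr
  · exact hU r s hrs f hf
  · simp [rot_self]
  · rw [rot_swap]
    exact U.neg_mem (hU s r hsr f hf)

lemma IsRotStable.inf {U V : Submodule R (MvPolynomial σ R)} (hU : IsRotStable U)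
    (hV : IsRotStable V) : IsRotStable (U ⊓ V) :=
  fun r s f hf => ⟨hU r s f hf.1, hV r s f hf.2⟩

lemma IsRotStable.iSup_map_pderiv {U : Submodule R (MvPolynomial σ R)} (hU : IsRotStable U) :
    IsRotStable (⨆ j, U.map (pderiv j).toLinearMap) := by
  classical
  have mem (j : σ) {f : MvPolynomial σ R} (hf : f ∈ U) :
      pderiv j f ∈ ⨆ j, U.map (pderiv j).toLinearMap :=
    Submodule.mem_iSup_of_mem j ⟨f, hf, rfl⟩
  intro r s
  suffices h : (⨆ j, U.map (pderiv j).toLinearMap) ≤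
      (⨆ j, U.map (pderiv j).toLinearMap).comap (rot r s).toLinearMap from h
  refine iSup_le fun j => ?_
  rintro _ ⟨f, hf, rfl⟩
  have comm : rot r s (pderiv j f) = pderiv j (rot r s f)
      - (if j = r then pderiv s f else 0) + (if j = s then pderiv r f else 0) := by
    rw [pderiv_rot]
    ring
  change rot r s (pderiv j f) ∈ ⨆ j, U.map (pderiv j).toLinearMap
  rw [comm]
  refine add_mem (sub_mem (mem j (hU r s f hf)) ?_) ?_ <;> split_ifs
  exacts [mem s hf, zero_mem _, mem r hf, zero_mem _]

-- Vanishing at the pole is inherited by the span of all partial derivatives of `U`: the rotations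
-- turn values at the pole into tangential derivatives there, and Euler's identity gives the
-- radial one.
theorem IsRotStable.eq_bot_of_eval_single_eq_zero [DecidableEq σ] [Finite σ] [IsDomain R]
    [CharZero R] {m : ℕ} (o : σ) {U : Submodule R (MvPolynomial σ R)} (hU : IsRotStable U)
    (hhom : U ≤ homogeneousSubmodule σ R m) (h0 : ∀ f ∈ U, eval (Pi.single o 1) f = 0) :
    U = ⊥ := by
  induction m generalizing U with
  | zero =>
    exact (Submodule.eq_bot_iff _).2 fun f hf =>
      eq_zero_of_isHomogeneous_zero (hhom hf) (h0 f hf)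
  | succ m ih =>
    have eval_pderiv (j : σ) {f : MvPolynomial σ R} (hf : f ∈ U) :
        eval (Pi.single o 1) (pderiv j f) = 0 := by
      rcases eq_or_ne j o with rfl | hj
      · rw [eval_single_pderiv_self (hhom hf), h0 f hf, mul_zero]
      · rw [← eval_single_rot hj, h0 _ (hU o j f hf)]
    have hbot : ⨆ j, U.map (pderiv j).toLinearMap = ⊥ := by
      refine ih hU.iSup_map_pderiv (iSup_le fun j => ?_) ?_
      · rintro _ ⟨f, hf, rfl⟩
        exact (hhom hf).pderiv
      · suffices h : ⨆ j, U.map (pderiv j).toLinearMap ≤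
            LinearMap.ker (aeval (Pi.single o (1 : R))).toLinearMap by
          intro f hf
          simpa [coe_aeval_eq_eval] using h hf
        refine iSup_le fun j => ?_
        rintro _ ⟨f, hf, rfl⟩
        simpa [coe_aeval_eq_eval] using eval_pderiv j hf
    refine (Submodule.eq_bot_iff _).2 fun f hf =>
      eq_zero_of_pderiv_eq_zero m.succ_ne_zero (hhom hf) fun j => ?_
    rw [← Submodule.mem_bot R, ← hbot]
    exact Submodule.mem_iSup_of_mem j ⟨f, hf, rfl⟩

end RotStable

section Zonal

variable {σ R : Type*} [CommRing R]

/-- A polynomial is zonal with pole the basis vector `e_o` if it is annihilated by the infinitesimal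
rotations that fix `e_o`. -/
def IsZonal (o : σ) (f : MvPolynomial σ R) : Prop :=
  ∀ r s, r ≠ o → s ≠ o → rot r s f = 0

variable {o : σ} {f : MvPolynomial σ R}

lemma IsZonal.pderiv_pole (hf : IsZonal o f) : IsZonal o (pderiv o f) := by
  classical
  intro r s hr hs
  simpa [hf r s hr hs, hr.symm, hs.symm] using (pderiv_rot r s o f).symm

variable [Fintype σ]

lemma IsZonal.smul_pderiv_eq_zero {m : ℕ} (hz : IsZonal o f) (hf : f.IsHomogeneous (m + 1))
    (hlap : laplacian σ R f = 0) (ho : pderiv o f = 0) {r : σ} (hr : r ≠ o) :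
    ((Fintype.card σ : R) + m - 2) • pderiv r f = 0 := by
  classical
  have hsum : ∑ s, pderiv s (rot r s f) = -pderiv r f := by
    rw [Finset.sum_eq_single o (fun s _ hs => by rw [hz r s hr hs, map_zero]) (by simp),
      pderiv_rot]
    simp [ho, rot_apply, hr.symm]
  have h := sum_pderiv_rot hf r
  rw [hsum, hlap, mul_zero, zero_sub] at h
  linear_combination (norm := module) h

theorem IsZonal.eq_zero [DecidableEq σ] [IsDomain R] [CharZero R] {m : ℕ} (hz : IsZonal o f)
    (hf : f.IsHomogeneous m) (hlap : laplacian σ R f = 0) (h0 : eval (Pi.single o 1) f = 0)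
    (h1 : ∀ r, r ≠ o → eval (Pi.single o 1) (pderiv r f) = 0) : f = 0 := by
  induction m generalizing f with
  | zero => exact eq_zero_of_isHomogeneous_zero hf h0
  | succ m ih =>
    have ho : pderiv o f = 0 := by
      refine ih hz.pderiv_pole hf.pderiv (by rw [laplacian_pderiv, hlap, map_zero]) ?_
        fun r hr => ?_
      · rw [eval_single_pderiv_self hf, h0, mul_zero]
      · rw [pderiv_comm, eval_single_pderiv_self hf.pderiv, h1 r hr, mul_zero]
    refine eq_zero_of_pderiv_eq_zero m.succ_ne_zero hf fun r => ?_
    rcases eq_or_ne r o with rfl | hr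
    · exact ho
    obtain rfl | hm := eq_or_ne m 0
    · exact eq_zero_of_isHomogeneous_zero hf.pderiv (h1 r hr)
    have hcard : 1 < Fintype.card σ := Fintype.one_lt_card_iff.2 ⟨r, o, hr⟩
    have hcoeff : (Fintype.card σ : R) + m - 2 ≠ 0 := by
      rw [sub_ne_zero]
      exact_mod_cast (by omega : Fintype.card σ + m ≠ 2)
    exact (smul_eq_zero.1 (hz.smul_pderiv_eq_zero hf hlap ho hr)).resolve_left hcoeff

end Zonal

section Fischer

variable {σ R : Type*} [CommRing R]

variable (σ R) in
/-- The Fischer product, the bilinear form on polynomials for which the monomials are orthogonal and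
`x^α` has square length `α!`. It makes multiplication by `x_r` adjoint to `∂_r`. -/
noncomputable def fischer : LinearMap.BilinForm R (MvPolynomial σ R) :=
  (basisMonomials σ R).constr R fun α => (α.prod fun _ k => (k.factorial : R)) • lcoeff R α

lemma fischer_monomial (α : σ →₀ ℕ) (c : R) (g : MvPolynomial σ R) :
    fischer σ R (monomial α c) g = c * ((α.prod fun _ k => (k.factorial : R)) * coeff α g) := by
  have h : monomial α c = c • basisMonomials σ R α := by simp [smul_monomial]
  rw [h, fischer, map_smul, Module.Basis.constr_basis]
  simp

lemma fischer_isSymm : (fischer σ R).IsSymm := by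
  classical
  refine LinearMap.BilinForm.isSymm_iff_flip.2 ?_
  refine (basisMonomials σ R).ext fun α => (basisMonomials σ R).ext fun β => ?_
  simp only [coe_basisMonomials, LinearMap.BilinForm.flip_apply, fischer_monomial, coeff_monomial]
  split_ifs <;> simp_all

lemma fischer_X_mul (r : σ) (f g : MvPolynomial σ R) :
    fischer σ R (X r * f) g = fischer σ R f (pderiv r g) := by
  induction f using MvPolynomial.induction_on' with
  | monomial α c =>
    have hX : X r * monomial α c = monomial (α + Finsupp.single r 1) c := by
      rw [mul_comm, X, monomial_mul, mul_one]
    have hfact : (α + Finsupp.single r 1).prod (fun _ k => (k.factorial : R)) =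
        (α r + 1) * α.prod fun _ k => (k.factorial : R) := by
      rw [← Finsupp.mul_prod_erase' _ r _ (by simp), ← Finsupp.mul_prod_erase' α r _ (by simp),
        Finsupp.erase_add, Finsupp.erase_single, add_zero, Finsupp.add_apply,
        Finsupp.single_eq_same, Nat.factorial_succ]
      push_cast
      ring
    rw [hX, fischer_monomial, fischer_monomial, coeff_pderiv, hfact]
    ring
  | add p q hp hq => simp [mul_add, hp, hq]

lemma fischer_rot (r s : σ) (f g : MvPolynomial σ R) :
    fischer σ R (rot r s f) g = -fischer σ R f (rot r s g) := by
  have h (i j : σ) :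
      fischer σ R (X i * pderiv j f) g = fischer σ R f (X j * pderiv i g) := by
    rw [fischer_X_mul, fischer_isSymm.eq, ← fischer_X_mul, fischer_isSymm.eq]
  simp [rot_apply, h]

lemma IsRotStable.orthogonal_fischer {U : Submodule R (MvPolynomial σ R)} (hU : IsRotStable U) :
    IsRotStable ((fischer σ R).orthogonal U) := by
  intro r s f hf u hu
  rw [← neg_eq_zero, ← fischer_rot]
  exact hf _ (hU r s u hu)

end Fischer

section FischerOrdered

variable {σ K : Type*} [Field K] [LinearOrder K] [IsStrictOrderedRing K]

lemma fischer_self_pos {f : MvPolynomial σ K} (hf : f ≠ 0) : 0 < fischer σ K f f := by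
  have hsum : fischer σ K f f =
      ∑ α ∈ f.support, coeff α f * ((α.prod fun _ k => (k.factorial : K)) * coeff α f) := by
    conv_lhs => enter [1]; rw [f.as_sum]
    simp only [map_sum, LinearMap.sum_apply, fischer_monomial]
  rw [hsum]
  refine Finset.sum_pos (fun α hα => ?_) (support_nonempty.2 hf)
  have hcoeff : 0 < coeff α f ^ 2 := by
    have := mem_support_iff.1 hα
    positivity
  have hfact : 0 < α.prod fun _ k => (k.factorial : K) :=
    Finset.prod_pos fun i _ => by positivity
  linarith [mul_pos hfact hcoeff]

lemma eq_zero_of_fischer_self_eq_zero {f : MvPolynomial σ K} (h : fischer σ K f f = 0) : f = 0 :=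
  by_contra fun hf => (fischer_self_pos hf).ne' h

lemma fischer_restrict_nondegenerate (U : Submodule K (MvPolynomial σ K)) :
    ((fischer σ K).restrict U).Nondegenerate :=
  LinearMap.BilinForm.nondegenerate_restrict_of_disjoint_orthogonal _ fischer_isSymm.isRefl <|
    Submodule.disjoint_def.2 fun _ hf hf' => eq_zero_of_fischer_self_eq_zero (hf' _ hf)

lemma exists_fischer_eq (U : Submodule K (MvPolynomial σ K)) [FiniteDimensional K U]
    (ℓ : Module.Dual K (MvPolynomial σ K)) : ∃ z ∈ U, ∀ f ∈ U, fischer σ K z f = ℓ f := by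
  let B := (fischer σ K).restrict U
  have hB : B.Nondegenerate := fischer_restrict_nondegenerate U
  let z : U := (B.toDual hB).symm (ℓ.domRestrict U)
  exact ⟨z, z.2, fun f hf => LinearMap.BilinForm.apply_toDual_symm_apply (hB := hB) _ ⟨f, hf⟩⟩

lemma sup_orthogonal_fischer (U : Submodule K (MvPolynomial σ K)) [FiniteDimensional K U] :
    U ⊔ (fischer σ K).orthogonal U = ⊤ := by
  refine eq_top_iff.2 fun f _ => ?_
  obtain ⟨z, hz, heq⟩ := exists_fischer_eq U (fischer σ K f)
  have horth : f - z ∈ (fischer σ K).orthogonal U := fun u hu => by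
    rw [fischer_isSymm.eq, map_sub, LinearMap.sub_apply, heq u hu, sub_self]
  exact Submodule.mem_sup.2 ⟨z, hz, f - z, horth, add_sub_cancel z f⟩

variable [DecidableEq σ]

/-- `z` is the zonal function of `U` with pole the basis vector `e_o`: it represents, within `U` and
for the Fischer product, the evaluation at `e_o`. -/
structure IsZonalFunction (o : σ) (U : Submodule K (MvPolynomial σ K)) (z : MvPolynomial σ K) :
    Prop where
  mem : z ∈ U
  fischer_eq : ∀ f ∈ U, fischer σ K z f = eval (Pi.single o 1) f

lemma exists_isZonalFunction (o : σ) (U : Submodule K (MvPolynomial σ K)) [FiniteDimensional K U] :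
    ∃ z, IsZonalFunction o U z := by
  obtain ⟨z, hz, heq⟩ := exists_fischer_eq U (aeval (Pi.single o (1 : K))).toLinearMap
  exact ⟨z, hz, fun f hf => by simpa [coe_aeval_eq_eval] using heq f hf⟩

namespace IsZonalFunction

variable {o : σ} {U : Submodule K (MvPolynomial σ K)} {z : MvPolynomial σ K}

lemma isZonal (hz : IsZonalFunction o U z) (hU : IsRotStable U) : IsZonal o z := by
  intro r s hr hs
  apply eq_zero_of_fischer_self_eq_zero
  rw [fischer_rot, hz.fischer_eq _ (hU r s _ (hU r s z hz.mem)), rot_apply]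
  simp [hr, hs]

lemma eval_pderiv_eq_zero (hz : IsZonalFunction o U z) (hU : IsRotStable U) {r : σ} (hr : r ≠ o) :
    eval (Pi.single o 1) (pderiv r z) = 0 := by
  have hskew : fischer σ K z (rot o r z) = -fischer σ K z (rot o r z) := by
    rw [← fischer_rot, fischer_isSymm.eq]
  rw [← eval_single_rot hr, ← hz.fischer_eq _ (hU o r z hz.mem)]
  linarith

lemma eval_ne_zero [Finite σ] {m : ℕ} (hz : IsZonalFunction o U z) (hU : IsRotStable U)
    (hhom : U ≤ homogeneousSubmodule σ K m) (hbot : U ≠ ⊥) : eval (Pi.single o 1) z ≠ 0 := by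
  intro h0
  have hz0 : z = 0 := eq_zero_of_fischer_self_eq_zero (by rw [hz.fischer_eq z hz.mem, h0])
  exact hbot (hU.eq_bot_of_eval_single_eq_zero o hhom fun f hf => by
    simp [← hz.fischer_eq f hf, hz0])

end IsZonalFunction

end FischerOrdered

section Harmonic

variable {σ : Type*} [Fintype σ]

variable (σ) in
/-- The space of harmonic homogeneous polynomials of degree `m`. -/
noncomputable def harmonicSubmodule (R : Type*) [CommRing R] (m : ℕ) :
    Submodule R (MvPolynomial σ R) :=
  homogeneousSubmodule σ R m ⊓ LinearMap.ker (laplacian σ R)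

lemma isRotStable_harmonicSubmodule (R : Type*) [CommRing R] (m : ℕ) :
    IsRotStable (harmonicSubmodule σ R m) :=
  fun r s f hf => ⟨isHomogeneous_rot hf.1 r s,
    LinearMap.mem_ker.2 (by rw [laplacian_rot, LinearMap.mem_ker.1 hf.2, map_zero])⟩

variable {K : Type*} [Field K] {m : ℕ}

lemma finiteDimensional_of_le_harmonicSubmodule {U : Submodule K (MvPolynomial σ K)}
    (hU : U ≤ harmonicSubmodule σ K m) : FiniteDimensional K U :=
  have : FiniteDimensional K (homogeneousSubmodule σ K m) :=
    Module.Finite.iff_fg.2 (homogeneousSubmodule_fg σ K m)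
  Submodule.finiteDimensional_of_le (hU.trans inf_le_left)

variable [LinearOrder K] [IsStrictOrderedRing K]

lemma IsZonalFunction.mem_of_le [DecidableEq σ] {o : σ} {U : Submodule K (MvPolynomial σ K)}
    {z : MvPolynomial σ K} (hz : IsZonalFunction o (harmonicSubmodule σ K m) z)
    (hle : U ≤ harmonicSubmodule σ K m) (hU : IsRotStable U) (hbot : U ≠ ⊥) : z ∈ U := by
  have := finiteDimensional_of_le_harmonicSubmodule hle
  obtain ⟨w, hw⟩ := exists_isZonalFunction o U
  have hH := isRotStable_harmonicSubmodule (σ := σ) K m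
  set a := eval (Pi.single o 1) w
  set b := eval (Pi.single o 1) z
  have ha : a ≠ 0 := hw.eval_ne_zero hU (hle.trans inf_le_left) hbot
  have hmem : a • z - b • w ∈ harmonicSubmodule σ K m :=
    sub_mem (Submodule.smul_mem _ _ hz.mem) (Submodule.smul_mem _ _ (hle hw.mem))
  have hzonal : IsZonal o (a • z - b • w) := fun r s hr hs => by
    simp [hz.isZonal hH r s hr hs, hw.isZonal hU r s hr hs]
  have hzero : a • z - b • w = 0 := by
    refine hzonal.eq_zero hmem.1 hmem.2 ?_ fun r hr => ?_
    · simp [smul_eval, a, b, mul_comm]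
    · simp [smul_eval, hz.eval_pderiv_eq_zero hH hr, hw.eval_pderiv_eq_zero hU hr]
  rw [← Submodule.smul_mem_iff _ ha, sub_eq_zero.1 hzero]
  exact Submodule.smul_mem _ _ hw.mem

theorem IsRotStable.eq_bot_or_eq_harmonicSubmodule [Nonempty σ]
    {U : Submodule K (MvPolynomial σ K)} (hU : IsRotStable U) (hle : U ≤ harmonicSubmodule σ K m) :
    U = ⊥ ∨ U = harmonicSubmodule σ K m := by
  classical
  refine or_iff_not_imp_left.2 fun hbot => ?_
  let o : σ := Classical.arbitrary σ
  have := finiteDimensional_of_le_harmonicSubmodule (le_refl (harmonicSubmodule σ K m))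
  have := finiteDimensional_of_le_harmonicSubmodule hle
  obtain ⟨z, hz⟩ := exists_isZonalFunction o (harmonicSubmodule σ K m)
  have hzU : z ∈ U := hz.mem_of_le hle hU hbot
  have hcompl : (fischer σ K).orthogonal U ⊓ harmonicSubmodule σ K m = ⊥ :=
    (hU.orthogonal_fischer.inf (isRotStable_harmonicSubmodule K m)).eq_bot_of_eval_single_eq_zero o
      (inf_le_right.trans inf_le_left) fun f hf => by rw [← hz.fischer_eq f hf.2, hf.1 z hzU]
  calc
    U = U ⊔ (fischer σ K).orthogonal U ⊓ harmonicSubmodule σ K m := by rw [hcompl, sup_bot_eq]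
    _ = (U ⊔ (fischer σ K).orthogonal U) ⊓ harmonicSubmodule σ K m :=
      (sup_inf_assoc_of_le _ hle).symm
    _ = harmonicSubmodule σ K m := by rw [sup_orthogonal_fischer, top_inf_eq]

end Harmonic

section Tuples

variable {n : ℕ}

/-- The map `f ↦ α |x|² ∇f + β f x`. Both `φ₁` and `φ₂`, and hence
`φ`, have this form. -/
noncomputable def gradRadialMap (n : ℕ) (α β : ℝ) :
    MvPolynomial (Fin n) ℝ →ₗ[ℝ] (Fin n → MvPolynomial (Fin n) ℝ) :=
  LinearMap.pi fun j =>
    α • LinearMap.mulLeft ℝ (∑ r, X r ^ 2) ∘ₗ (pderiv j).toLinearMap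
      + β • LinearMap.mulRight ℝ (X j)

lemma gradRadialMap_apply (α β : ℝ) (f : MvPolynomial (Fin n) ℝ) (j : Fin n) :
    gradRadialMap n α β f j = α • ((∑ r, X r ^ 2) * pderiv j f) + β • (f * X j) := rfl

lemma Lop_gradRadialMap (α β : ℝ) (r s : Fin n) (f : MvPolynomial (Fin n) ℝ) :
    Lop r s (gradRadialMap n α β f) = gradRadialMap n α β (rot r s f) := by
  have hgrad (j : Fin n) : rot r s ((∑ i, X i ^ 2) * pderiv j f) =
      (∑ i, X i ^ 2) * rot r s (pderiv j f) := by
    rw [Derivation.leibniz, rot_sum_X_sq, smul_zero, add_zero, smul_eq_mul]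
  have hradial (j : Fin n) : rot r s (f * X j) =
      rot r s f * X j + f * ((if j = s then X r else 0) - (if j = r then X s else 0)) := by
    rw [Derivation.leibniz, rot_X, smul_eq_mul, smul_eq_mul]
    ring
  funext j
  simp only [Lop, ← rot_apply]
  simp only [gradRadialMap_apply, map_add, Derivation.map_smul, hgrad, hradial, pderiv_rot]
  generalize ∑ i : Fin n, (X i : MvPolynomial (Fin n) ℝ) ^ 2 = q
  split_ifs <;> simp_all [smul_eq_C_mul] <;> ring

lemma exists_phiMap_eq_gradRadialMap (n : ℕ) (b : ℝ) (k : ℕ) :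
    ∃ α β : ℝ, phiMap b k = gradRadialMap n α β := by
  refine ⟨((k : ℝ) - 1) + (2 * (k : ℝ) + n - 2) * ((k : ℝ) + n - 3) * ((k : ℝ) - 1) /
    (2 * (b⁻¹ * (2 * (k : ℝ) + n - 4) + (k : ℝ) - 1)),
    -(((k : ℝ) - 1) * (2 * (k : ℝ) + n - 4)), ?_⟩
  funext f j
  rw [phiMap, gradRadialMap_apply]
  module

lemma exists_phiH_eq_map_gradRadialMap (n : ℕ) (b : ℝ) (k : ℕ) :
    ∃ α β : ℝ, phiH n b k = (harmonicSubmodule (Fin n) ℝ (k - 1)).map (gradRadialMap n α β) := by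
  obtain ⟨α, β, h⟩ := exists_phiMap_eq_gradRadialMap n b k
  refine ⟨α, β, Set.ext fun z => ?_⟩
  simp [phiH, h, harmonicSubmodule, laplacian_apply, lap, and_assoc, eq_comm]

theorem phiH_irreducible_general [NeZero n] (α β : ℝ) (m : ℕ) :
    (∀ r s : Fin n, r < s → ∀ u ∈ (harmonicSubmodule (Fin n) ℝ m).map (gradRadialMap n α β),
      Lop r s u ∈ (harmonicSubmodule (Fin n) ℝ m).map (gradRadialMap n α β)) ∧
    ∀ W ≤ (harmonicSubmodule (Fin n) ℝ m).map (gradRadialMap n α β),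
      (∀ r s : Fin n, r < s → ∀ u ∈ W, Lop r s u ∈ W) →
      W = ⊥ ∨ W = (harmonicSubmodule (Fin n) ℝ m).map (gradRadialMap n α β) := by
  have hH := isRotStable_harmonicSubmodule (σ := Fin n) ℝ m
  refine ⟨?_, fun W hW hinv => ?_⟩
  · rintro r s - _ ⟨f, hf, rfl⟩
    exact ⟨rot r s f, hH r s f hf, (Lop_gradRadialMap α β r s f).symm⟩
  · have hV : IsRotStable (harmonicSubmodule (Fin n) ℝ m ⊓ W.comap (gradRadialMap n α β)) :=
      hH.inf <| .of_lt fun r s hrs f hf => by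
        rw [Submodule.mem_comap, ← Lop_gradRadialMap]
        exact hinv r s hrs _ hf
    have hmap : (harmonicSubmodule (Fin n) ℝ m ⊓ W.comap (gradRadialMap n α β)).map
        (gradRadialMap n α β) = W := by
      refine le_antisymm (Submodule.map_le_iff_le_comap.2 inf_le_right) fun z hz => ?_
      obtain ⟨f, hf, rfl⟩ := hW hz
      exact ⟨f, ⟨hf, hz⟩, rfl⟩
    rw [← hmap]
    rcases hV.eq_bot_or_eq_harmonicSubmodule inf_le_left with h | h
    · exact .inl (by rw [h, Submodule.map_bot])
    · exact .inr (by rw [h])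

end Tuples

/-- for `k ≥ 2`, `φ(H_{k−1})` is invariant under all `L_{r,s}` and is
irreducible: its only `L_{r,s}`-invariant ℝ-subspaces are `{0}` and itself. -/
theorem phiH_irreducible (n : ℕ) (hn : 3 ≤ n) (b : ℝ) (hb : b ≠ 0) (hb1 : 0 < b + 1)
    (k : ℕ) (hk : 2 ≤ k) :
    (∀ r s : Fin n, r < s → ∀ u ∈ phiH n b k, Lop r s u ∈ phiH n b k) ∧
    (∀ W : Submodule ℝ (Fin n → MvPolynomial (Fin n) ℝ),
      (W : Set (Fin n → MvPolynomial (Fin n) ℝ)) ⊆ phiH n b k →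
      (∀ r s : Fin n, r < s → ∀ u ∈ W, Lop r s u ∈ W) →
      (W : Set (Fin n → MvPolynomial (Fin n) ℝ)) = {0} ∨
        (W : Set (Fin n → MvPolynomial (Fin n) ℝ)) = phiH n b k) := by
  have : NeZero n := ⟨by omega⟩
  obtain ⟨α, β, hφ⟩ := exists_phiH_eq_map_gradRadialMap n b k
  simpa only [hφ, ← Submodule.bot_coe (R := ℝ), SetLike.coe_set_eq, SetLike.coe_subset_coe,
    SetLike.mem_coe] using phiH_irreducible_general α β (k - 1)
end

section
/- Let p ≠ q be indices in {1,…,n} and k ≥ 0. The n-tuple of complex polynomials u with u_p = (x_p + i x_q)^k, u_q = i(x_p + i x_q)^k, and all other components 0, satisfies the complex Navier equations: Δu_j + b·∂_{x_j}(∑ᵣ ∂_{x_r} u_r) = 0 for all j. -/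
/-!
Let `ℓ = ∑ᵢ aᵢ xᵢ` be a linear form with isotropic coefficient vector, `a · a = 0`, and let `f` be a
univariate polynomial. By the chain rule every partial derivative `∂ᵣ` of `f(ℓ)` only produces a
factor `aᵣ`, so both the Laplacian of `f(ℓ)` and the divergence of the field `f(ℓ) a` are multiples
of `a · a`. Hence `f(ℓ) a` is harmonic and divergence-free, and both terms of the Navier operator
vanish on it. The vector `e_p + i e_q` is isotropic because `1 + i² = 0`.
-/

open MvPolynomial

/-- The Laplacian `Δ = ∑ᵣ ∂²_{xᵣ}` on `ℂ[x₁,…,xₙ]`. -/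
noncomputable def lapC {n : ℕ} (p : MvPolynomial (Fin n) ℂ) : MvPolynomial (Fin n) ℂ :=
  ∑ r : Fin n, pderiv r (pderiv r p)

/-- The complexified Navier operator `N(u)ⱼ = Δuⱼ + b·∂_{xⱼ}(∑ᵣ ∂_{xᵣ} uᵣ)`. -/
noncomputable def navierC {n : ℕ} (b : ℝ) (u : Fin n → MvPolynomial (Fin n) ℂ) :
    Fin n → MvPolynomial (Fin n) ℂ :=
  fun j => lapC (u j) + C (b : ℂ) * pderiv j (∑ r : Fin n, pderiv r (u r))

section PlaneWave

variable {σ R : Type*} [Fintype σ] [CommSemiring R]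

/-- The Laplacian `∑ᵣ ∂²_{xᵣ}` of a polynomial, over any coefficient semiring. -/
noncomputable def polyLaplacian (g : MvPolynomial σ R) : MvPolynomial σ R :=
  ∑ r, pderiv r (pderiv r g)

/-- The divergence `∑ᵣ ∂_{xᵣ} uᵣ` of a tuple of polynomials. -/
noncomputable def polyDivergence (u : σ → MvPolynomial σ R) : MvPolynomial σ R :=
  ∑ r, pderiv r (u r)

/-- The Navier operator `Δuⱼ + b ∂_{xⱼ} (div u)` over any coefficient semiring; `navierC` is the
case of complex coefficients and real `b`. -/
noncomputable def polyNavier (b : R) (u : σ → MvPolynomial σ R) : σ → MvPolynomial σ R :=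
  fun j => polyLaplacian (u j) + C b * pderiv j (polyDivergence u)

/-- The linear form `∑ᵢ aᵢ xᵢ` with coefficient vector `a`. -/
noncomputable def linearForm (a : σ → R) : MvPolynomial σ R :=
  Fintype.linearCombination R X a

/-- The plane wave `f(ℓ) a` with profile `f`, where `ℓ = ∑ᵢ aᵢ xᵢ`: the direction of propagation and
the polarization are the same vector `a`. -/
noncomputable def planeWave (a : σ → R) (f : Polynomial R) : σ → MvPolynomial σ R :=
  fun j => a j • Polynomial.aeval (linearForm a) f

lemma pderiv_linearForm (a : σ → R) (r : σ) : pderiv r (linearForm a) = C (a r) := by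
  classical
  simp [linearForm, Fintype.linearCombination_apply, pderiv_X, Pi.single_apply, smul_eq_C_mul]

lemma pderiv_aeval_linearForm (a : σ → R) (f : Polynomial R) (r : σ) :
    pderiv r (Polynomial.aeval (linearForm a) f) =
      a r • Polynomial.aeval (linearForm a) f.derivative := by
  rw [Derivation.map_aeval, pderiv_linearForm, smul_eq_mul, mul_comm, smul_eq_C_mul]

lemma polyLaplacian_smul (c : R) (g : MvPolynomial σ R) :
    polyLaplacian (c • g) = c • polyLaplacian g := by
  simp only [polyLaplacian, Derivation.map_smul, Finset.smul_sum]

lemma polyLaplacian_aeval_linearForm (a : σ → R) (f : Polynomial R) :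
    polyLaplacian (Polynomial.aeval (linearForm a) f) =
      (a ⬝ᵥ a) • Polynomial.aeval (linearForm a) f.derivative.derivative := by
  simp only [polyLaplacian, pderiv_aeval_linearForm, Derivation.map_smul, smul_smul, dotProduct,
    Finset.sum_smul]

lemma polyDivergence_planeWave (a : σ → R) (f : Polynomial R) :
    polyDivergence (planeWave a f) =
      (a ⬝ᵥ a) • Polynomial.aeval (linearForm a) f.derivative := by
  simp only [polyDivergence, planeWave, pderiv_aeval_linearForm, Derivation.map_smul, smul_smul,
    dotProduct, Finset.sum_smul]

theorem navier_solution_v1_general (b : R) {a : σ → R} (ha : a ⬝ᵥ a = 0) (f : Polynomial R) :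
    polyNavier b (planeWave a f) = 0 := by
  funext j
  have harmonic : polyLaplacian (planeWave a f j) = 0 := by
    rw [planeWave, polyLaplacian_smul, polyLaplacian_aeval_linearForm, ha, zero_smul, smul_zero]
  have divergence_free : polyDivergence (planeWave a f) = 0 := by
    rw [polyDivergence_planeWave, ha, zero_smul]
  simp only [polyNavier, harmonic, divergence_free, map_zero, mul_zero, add_zero, Pi.zero_apply]

end PlaneWave

section CoordinatePlane

variable {σ R : Type*} [Fintype σ] [DecidableEq σ] [CommSemiring R] {p q : σ}

lemma dotProduct_self_single_one_add_single (hpq : p ≠ q) (c : R) :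
    (Pi.single p 1 + Pi.single q c : σ → R) ⬝ᵥ (Pi.single p 1 + Pi.single q c) = 1 + c * c := by
  simp [hpq, hpq.symm]

lemma linearForm_single_one_add_single (p q : σ) (c : R) :
    linearForm (Pi.single p 1 + Pi.single q c) = X p + C c * X q := by
  simp only [linearForm, map_add, Fintype.linearCombination_apply_single, one_smul, smul_eq_C_mul]

lemma planeWave_single_one_add_single (hpq : p ≠ q) (c : R) (f : Polynomial R) :
    planeWave (Pi.single p 1 + Pi.single q c) f = fun r =>
      if r = p then Polynomial.aeval (X p + C c * X q) f
      else if r = q then C c * Polynomial.aeval (X p + C c * X q) f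
      else 0 := by
  funext r
  rw [planeWave, linearForm_single_one_add_single]
  split_ifs with hp hq
  · simp [hp, hpq]
  · simp [hq, hpq.symm, smul_eq_C_mul]
  · simp [hp, hq]

end CoordinatePlane

lemma navierC_eq_polyNavier {n : ℕ} (b : ℝ) (u : Fin n → MvPolynomial (Fin n) ℂ) :
    navierC b u = polyNavier (b : ℂ) u :=
  rfl

/-- for `p ≠ q` and any `k ≥ 0`, the tuple with `(x_p + i x_q)^k` in
position `p`, `i(x_p + i x_q)^k` in position `q` and `0` elsewhere satisfies the
complex Navier equations. -/
theorem navier_solution_v1 (n : ℕ) (hn : 3 ≤ n) (b : ℝ) (hb : b ≠ 0)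
    (hb1 : 0 < b + 1) (p q : Fin n) (hpq : p ≠ q) (k : ℕ) :
    ∀ j, navierC b
      (fun r =>
        if r = p then (X p + C Complex.I * X q) ^ k
        else if r = q then C Complex.I * (X p + C Complex.I * X q) ^ k
        else 0) j = 0 := by
  have wave := navier_solution_v1_general (b : ℂ) (f := Polynomial.X ^ k) <|
    (dotProduct_self_single_one_add_single hpq Complex.I).trans (by simp)
  simpa [navierC_eq_polyNavier, planeWave_single_one_add_single hpq] using congrFun wave
end

section
/- Let n ≥ 3, let b be a real number with b + 1 > 0, let â₁,…,âₙ be real numbers, and set η = ∑_{j=2}^n âⱼ², ξ = â₁·η, a = (b+1)² + 1, and ϖ = (b+2)²ξ² + 4(b+1)η (note ϖ ≥ 0). Let A be the real symmetric n×n matrix with entries A₁₁ = ξ/(b+1), A₁ⱼ = Aⱼ₁ = b·âⱼ/√(b+1) for 2 ≤ j ≤ n, and Aⱼₗ = b·â₁·âⱼ·âₗ + δⱼₗ·ξ for 2 ≤ j,l ≤ n. Then the characteristic polynomial of A is det(λ·Iₙ − A) = (λ − ξ)^{n−2}·(λ − θ₁)·(λ − θ₂), where θ₁ = (aξ + b√ϖ)/(2(b+1))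 and θ₂ = (aξ − b√ϖ)/(2(b+1)). -/
/-!
With `e` the basis vector of the distinguished coordinate and `u` the vector `w` with that
coordinate set to zero, `A - ξ` is `U S Uᵀ` with `S` of size `2 × 2` and `U` of columns `e`, `u`.
The matrices `U S Uᵀ` and `S Uᵀ U` have the same characteristic polynomial up to a power of `X`, and
since `e` and `u` are orthogonal the Gram matrix `Uᵀ U` is `diag(1, η)`. So apart from `n - 2`
eigenvalues `ξ`, the spectrum of `A` is that of the `2 × 2` matrix `ξ + S diag(1, η)`, which is
found from its trace and determinant.
-/

open Matrix Polynomial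

section CommRing

variable {R : Type*} [CommRing R]

theorem det_smul_one_sub_eq_eval_charpoly {n : Type*} [Fintype n] [DecidableEq n]
    (M : Matrix n n R) (x : R) : (x • (1 : Matrix n n R) - M).det = M.charpoly.eval x := by
  rw [eval_charpoly, scalar_apply, smul_one_eq_diagonal]

theorem charpoly_scalar_add {n : Type*} [Fintype n] [DecidableEq n]
    (x : R) (M : Matrix n n R) :
    (scalar n x + M).charpoly = M.charpoly.comp (X - C x) := by
  rw [add_comm, ← sub_neg_eq_add, ← map_neg, charpoly_sub_scalar, C_neg, sub_eq_add_neg]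

theorem charpoly_scalar_add_mul {m n : Type*} [Fintype m] [DecidableEq m] [Fintype n]
    [DecidableEq n] (hle : Fintype.card n ≤ Fintype.card m) (x : R) (U : Matrix m n R)
    (V : Matrix n m R) :
    (scalar m x + U * V).charpoly =
      (X - C x) ^ (Fintype.card m - Fintype.card n) * (scalar n x + V * U).charpoly := by
  rw [charpoly_scalar_add, charpoly_scalar_add, charpoly_mul_comm_of_le U V hle, mul_comp, pow_comp,
    X_comp]

theorem charpoly_fin_two_of_trace_det (M : Matrix (Fin 2) (Fin 2) R) {s t : R}
    (htrace : M.trace = s + t) (hdet : M.det = s * t) :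
    M.charpoly = (X - C s) * (X - C t) := by
  nontriviality R
  rw [charpoly_fin_two, htrace, hdet, C_add, C_mul]
  ring

variable {ι : Type*} [DecidableEq ι]

/-- The symmetric matrix obtained from the rank-one perturbation `x + q w wᵀ` of a scalar matrix by
replacing the entry `(i₀, i₀)` by `p` and the rest of row and column `i₀` by `c w`. The coordinate
`w i₀` is ignored. -/
def borderedRankOne (i₀ : ι) (w : ι → R) (p c q x : R) : Matrix ι ι R :=
  of fun i j =>
    if i = i₀ then if j = i₀ then p else c * w j
    else if j = i₀ then c * w i else q * w i * w j + if i = j then x else 0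

/-- The matrix with two columns: the basis vector at `i₀`, and `w` with coordinate `i₀` set to
zero. -/
def borderColumns (i₀ : ι) (w : ι → R) : Matrix ι (Fin 2) R :=
  (of ![Pi.single i₀ 1, Function.update w i₀ 0])ᵀ

variable [Fintype ι]

theorem borderedRankOne_eq_scalar_add (i₀ : ι) (w : ι → R) (p c q x : R) :
    borderedRankOne i₀ w p c q x =
      scalar ι x + borderColumns i₀ w * (!![p - x, c; c, q] * (borderColumns i₀ w)ᵀ) := by
  ext i j
  by_cases hi : i = i₀ <;> by_cases hj : j = i₀ <;> by_cases hij : i = j <;>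
    simp_all [borderedRankOne, borderColumns, Matrix.mul_apply, Fin.sum_univ_two] <;>
    ring

theorem borderColumns_transpose_mul_self (i₀ : ι) (w : ι → R) :
    (borderColumns i₀ w)ᵀ * borderColumns i₀ w =
      !![1, 0; 0, ∑ j, if j = i₀ then 0 else w j ^ 2] := by
  ext k l
  fin_cases k <;> fin_cases l
  · simp [borderColumns, Matrix.mul_apply, Pi.single_apply]
  · simp [borderColumns, Matrix.mul_apply, Pi.single_apply]
  · simp [borderColumns, Matrix.mul_apply, Pi.single_apply]
  · simp [borderColumns, Matrix.mul_apply, Function.update_apply, ← sq, ite_pow]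

theorem charpoly_borderedRankOne [Nontrivial ι] (i₀ : ι) (w : ι → R) (p c q x : R) {η : R}
    (hη : η = ∑ j, if j = i₀ then 0 else w j ^ 2) :
    (borderedRankOne i₀ w p c q x).charpoly =
      (X - C x) ^ (Fintype.card ι - 2) * (!![p, c * η; c, x + q * η]).charpoly := by
  have hcompress : scalar (Fin 2) x + !![p - x, c; c, q] * (borderColumns i₀ w)ᵀ *
      borderColumns i₀ w = !![p, c * η; c, x + q * η] := by
    rw [Matrix.mul_assoc, borderColumns_transpose_mul_self, ← hη]
    ext k l
    fin_cases k <;> fin_cases l <;> simp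
  have hcard : Fintype.card (Fin 2) ≤ Fintype.card ι := by
    rw [Fintype.card_fin]
    exact Fintype.one_lt_card
  rw [borderedRankOne_eq_scalar_add, charpoly_scalar_add_mul hcard, hcompress, Fintype.card_fin]

end CommRing

theorem charpoly_of_A_general {K ι : Type*} [Field K] [NeZero (2 : K)] [Fintype ι]
    [DecidableEq ι] [Nontrivial ι] (i₀ : ι) (b s r : K) (hb : b + 1 ≠ 0) (hs : s ^ 2 = b + 1)
    (w : ι → K) (η ξ a : K)
    (hη : η = ∑ j, if j = i₀ then 0 else w j ^ 2)
    (hξ : ξ = w i₀ * η)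
    (ha : a = (b + 1) ^ 2 + 1)
    (hr : r ^ 2 = (b + 2) ^ 2 * ξ ^ 2 + 4 * (b + 1) * η)
    (A : Matrix ι ι K)
    (hA : ∀ i j, A i j =
      if i = i₀ then (if j = i₀ then ξ / (b + 1) else b * w j / s)
      else (if j = i₀ then b * w i / s
        else b * w i₀ * w i * w j + if i = j then ξ else 0)) :
    A.charpoly = (X - C ξ) ^ (Fintype.card ι - 2) *
      (X - C ((a * ξ + b * r) / (2 * (b + 1)))) * (X - C ((a * ξ - b * r) / (2 * (b + 1)))) := by
  have hA' : A = borderedRankOne i₀ w (ξ / (b + 1)) (b / s) (b * w i₀) ξ := by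
    ext i j
    simp only [hA, borderedRankOne, of_apply, div_mul_eq_mul_div]
  have hlower : ξ + b * w i₀ * η = (b + 1) * ξ := by rw [hξ]; ring
  have htrace : (!![ξ / (b + 1), b / s * η; b / s, (b + 1) * ξ]).trace =
      (a * ξ + b * r) / (2 * (b + 1)) + (a * ξ - b * r) / (2 * (b + 1)) := by
    rw [trace_fin_two_of, ha]
    field_simp
    ring
  have hdet : (!![ξ / (b + 1), b / s * η; b / s, (b + 1) * ξ]).det =
      (a * ξ + b * r) / (2 * (b + 1)) * ((a * ξ - b * r) / (2 * (b + 1))) := by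
    have hcross : b / s * η * (b / s) = b ^ 2 * η / (b + 1) := by rw [← hs]; ring
    rw [det_fin_two_of, hcross, ha]
    field_simp
    linear_combination b ^ 2 * hr
  rw [hA', charpoly_borderedRankOne i₀ w _ _ _ _ hη, hlower,
    charpoly_fin_two_of_trace_det _ htrace hdet, mul_assoc]

/-- the characteristic polynomial of the matrix `A` (arising from Xu's
method for Navier equations) is `(λ − ξ)^{n−2}(λ − θ₁)(λ − θ₂)`, where
`θ₁ = (aξ + b√ϖ)/(2(b+1))` and `θ₂ = (aξ − b√ϖ)/(2(b+1))`.  Here the index `0`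
plays the role of the first coordinate and `w : Fin n → ℝ` is the vector
`(â₁,…,âₙ)`. -/
theorem charpoly_of_A (n : ℕ) (hn : 3 ≤ n) (b : ℝ) (hb1 : 0 < b + 1)
    (w : Fin n → ℝ) (η ξ a ϖ : ℝ)
    (hη : η = ∑ j : Fin n, if (j : ℕ) = 0 then 0 else (w j) ^ 2)
    (hξ : ξ = w ⟨0, by omega⟩ * η)
    (ha : a = (b + 1) ^ 2 + 1)
    (hϖ : ϖ = (b + 2) ^ 2 * ξ ^ 2 + 4 * (b + 1) * η)
    (A : Matrix (Fin n) (Fin n) ℝ)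
    (hA : ∀ i j : Fin n, A i j =
      if (i : ℕ) = 0 then
        (if (j : ℕ) = 0 then ξ / (b + 1) else b * w j / Real.sqrt (b + 1))
      else
        (if (j : ℕ) = 0 then b * w i / Real.sqrt (b + 1)
         else b * w ⟨0, by omega⟩ * w i * w j + (if i = j then ξ else 0))) :
    ∀ lam : ℝ,
      (lam • (1 : Matrix (Fin n) (Fin n) ℝ) - A).det =
        (lam - ξ) ^ (n - 2) *
          (lam - (a * ξ + b * Real.sqrt ϖ) / (2 * (b + 1))) *
          (lam - (a * ξ - b * Real.sqrt ϖ) / (2 * (b + 1))) := by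
  have : Nontrivial (Fin n) := Fin.nontrivial_iff_two_le.mpr (by omega)
  have hη0 : 0 ≤ η := hη ▸ Finset.sum_nonneg fun j _ => by positivity
  have hϖ0 : 0 ≤ ϖ := by rw [hϖ]; positivity
  have hcharpoly := charpoly_of_A_general (⟨0, by omega⟩ : Fin n) b √(b + 1) √ϖ hb1.ne'
    (Real.sq_sqrt hb1.le) w η ξ a (by simpa only [Fin.ext_iff] using hη) hξ ha
    (by rw [Real.sq_sqrt hϖ0, hϖ]) A (by simpa only [Fin.ext_iff] using hA)
  intro lam
  simp [det_smul_one_sub_eq_eval_charpoly, hcharpoly]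
end

section
/- For each r ∈ {1,…,n}, ε ∈ {0,1}, and (l₁,…,lₙ) ∈ ℕⁿ, define the n-tuple u^{(r,ε,l)} of elements of ℝ[t,x₁,…,xₙ] whose j-th component is u_j = δ_{j,r}·(t^ε·x^l + ∑_{m≥1} b^{−m}·t^{ε+2m}/(ε+2m)!·Δ^m(x^l)) + ∑_{m≥1} b^{−m}·((b+1)^m − 1)·t^{ε+2m}/(ε+2m)!·Δ^{m−1}(∂_{x_j}∂_{x_r}(x^l)), where x^l = x₁^{l₁}···xₙ^{lₙ}; the sums are finite since Δ^m(x^l) = 0 for large m, so each u^{(r,ε,l)} is a polynomial. Then each u^{(r,ε,l)} is a solution of the Lamé equations, and the collection {u^{(r,ε,l)} : r ∈ {1,…,n}, ε ∈ {0,1}, l ∈ ℕⁿ} is a basis of the ℝ-vector space of all polynomial solutions of the Lamé equations. -/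
open MvPolynomial

/-- The spatial Laplacian `Δ = ∑ᵣ ∂²_{x_r}` on `ℝ[t,x₁,…,xₙ]`, where the variable of
index `0` is `t` and the variable of index `r.succ` is `x_r`. -/
noncomputable def lapX {n : ℕ} (p : MvPolynomial (Fin (n + 1)) ℝ) :
    MvPolynomial (Fin (n + 1)) ℝ :=
  ∑ r : Fin n, pderiv r.succ (pderiv r.succ p)

/-- `u` is a (polynomial) solution of the Lamé equations
`∂²_t u_j = b⁻¹·Δu_j + ∂_{x_j}(∑ᵣ ∂_{x_r} u_r)`. -/
def IsLameSol {n : ℕ} (b : ℝ) (u : Fin n → MvPolynomial (Fin (n + 1)) ℝ) : Prop :=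
  ∀ j : Fin n,
    pderiv (0 : Fin (n + 1)) (pderiv (0 : Fin (n + 1)) (u j)) =
      b⁻¹ • lapX (u j) + pderiv j.succ (∑ r : Fin n, pderiv r.succ (u r))

/-- The monomial `x^l = x₁^{l₁}⋯xₙ^{lₙ}`. -/
noncomputable def xPow {n : ℕ} (l : Fin n → ℕ) : MvPolynomial (Fin (n + 1)) ℝ :=
  ∏ s : Fin n, (X s.succ) ^ (l s)

/-- The solution `u^{(r,ε,l)}` of the Lamé equations:
`u_j = δ_{j,r}·(t^ε·x^l + ∑_{m≥1} b^{−m}·t^{ε+2m}/(ε+2m)!·Δ^m(x^l))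
      + ∑_{m≥1} b^{−m}·((b+1)^m − 1)·t^{ε+2m}/(ε+2m)!·Δ^{m−1}(∂_{x_j}∂_{x_r}(x^l))`.
(The sums over `m ≥ 1` are finitely supported, hence taken as `finsum`s.) -/
noncomputable def uSol {n : ℕ} (b : ℝ) (r : Fin n) (ε : ℕ) (l : Fin n → ℕ) :
    Fin n → MvPolynomial (Fin (n + 1)) ℝ :=
  fun j =>
    (if j = r then
      (X (0 : Fin (n + 1))) ^ ε * xPow l +
        ∑ᶠ m : ℕ, ((b⁻¹) ^ (m + 1) / ((ε + 2 * (m + 1)).factorial : ℝ)) •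
          ((X (0 : Fin (n + 1))) ^ (ε + 2 * (m + 1)) * lapX^[m + 1] (xPow l))
    else 0) +
    ∑ᶠ m : ℕ, ((b⁻¹) ^ (m + 1) * ((b + 1) ^ (m + 1) - 1) /
        ((ε + 2 * (m + 1)).factorial : ℝ)) •
      ((X (0 : Fin (n + 1))) ^ (ε + 2 * (m + 1)) *
        lapX^[m] (pderiv j.succ (pderiv r.succ (xPow l))))

/-
Put `L = b⁻¹ Δ + ∇ div`, acting on tuples of polynomials, so that the equations read
`∂ₜ² u = L u`. The series `∑ₘ t^(ε+2m)/(ε+2m)! Lᵐ v` solves them for every time-independent `v`.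
Since `Δ` commutes with `∇ div` and `(∇ div)² = Δ (∇ div)`, the powers of `L` have the
closed form `Lᵐ = b⁻ᵐ (Δᵐ + ((b+1)ᵐ - 1) Δᵐ⁻¹ (∇ div))` for `m ≥ 1`, and `v = x^l eᵣ` gives
exactly `u^{(r,ε,l)}`. Conversely `L` preserves divisibility by powers of `t`, so a solution
divisible by `t²` has a second time derivative divisible by `t²`, hence is itself divisible
by `t⁴`, and so on: it vanishes. A solution is thus determined by its coefficients at `t⁰`
and `t¹`, and the functionals reading off these coefficients are dual to the family
`u^{(r,ε,l)}`.
-/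

namespace Lame

theorem add_smul_pow_succ {R A : Type*} [CommRing R] [Ring A] [Algebra R A] {a e : A}
    (hae : Commute a e) (he : e * e = a * e) (b : R) (m : ℕ) :
    (a + b • e) ^ (m + 1) = a ^ (m + 1) + ((b + 1) ^ (m + 1) - 1) • (a ^ m * e) := by
  induction m with
  | zero => simp
  | succ m ih =>
    have hea : a ^ m * e * a = a ^ (m + 1) * e := by
      rw [mul_assoc, ← hae.eq, ← mul_assoc, ← pow_succ]
    have hee : a ^ m * e * e = a ^ (m + 1) * e := by
      rw [mul_assoc, he, ← mul_assoc, ← pow_succ]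
    rw [pow_succ, ih]
    simp only [add_mul, mul_add, smul_mul_assoc, mul_smul_comm, hea, hee, ← pow_succ]
    module

theorem compLeft_pow {R P : Type*} [Semiring R] [AddCommMonoid P] [Module R P]
    (f : Module.End R P) (ι : Type*) (m : ℕ) :
    (f.compLeft ι) ^ m = (f ^ m).compLeft ι := by
  induction m with
  | zero => rfl
  | succ m ih => rw [pow_succ, ih, pow_succ]; rfl

section VectorCalculus

variable {R P ι : Type*} [Semiring R] [AddCommMonoid P] [Module R P]

/-- The gradient `p ↦ (∂ᵢ p)ᵢ` of a family of endomorphisms `∂ᵢ` in the role of partial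
derivatives. -/
def gradient (d : ι → Module.End R P) : P →ₗ[R] (ι → P) :=
  LinearMap.pi d

variable [Fintype ι]

/-- The divergence `u ↦ ∑ᵢ ∂ᵢ uᵢ` of a family of endomorphisms `∂ᵢ`. -/
def divergence (d : ι → Module.End R P) : (ι → P) →ₗ[R] P :=
  ∑ i, d i ∘ₗ LinearMap.proj i

/-- The Laplacian `∑ᵢ ∂ᵢ²` of a family of endomorphisms `∂ᵢ`. -/
def laplacian (d : ι → Module.End R P) : Module.End R P :=
  ∑ i, d i * d i

/-- The operator `u ↦ ∇ (div u)`. -/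
def gradDiv (d : ι → Module.End R P) : Module.End R (ι → P) :=
  gradient d ∘ₗ divergence d

variable {d : ι → Module.End R P}

@[simp]
theorem divergence_apply (u : ι → P) : divergence d u = ∑ i, d i (u i) := by
  simp [divergence]

@[simp]
theorem laplacian_apply (p : P) : laplacian d p = ∑ i, d i (d i p) := by
  simp [laplacian]

@[simp]
theorem gradDiv_apply (u : ι → P) (j : ι) : gradDiv d u j = d j (∑ i, d i (u i)) := by
  simp [gradDiv, gradient]

theorem commute_laplacian {f : Module.End R P} (hf : ∀ i, Commute f (d i)) :
    Commute f (laplacian d) :=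
  Commute.sum_right _ _ _ fun i _ => (hf i).mul_right (hf i)

theorem laplacian_pow_map (hd : ∀ i j, Commute (d i) (d j)) (N : ℕ) (i : ι) (p : P) :
    (laplacian d ^ N) (d i p) = d i ((laplacian d ^ N) p) :=
  (LinearMap.congr_fun ((commute_laplacian (hd i)).pow_right N).eq p).symm

theorem compLeft_commute_gradDiv {f : Module.End R P} (hf : ∀ i, Commute f (d i)) :
    Commute (f.compLeft ι) (gradDiv d) := by
  have hcomm (i : ι) (p : P) : f (d i p) = d i (f p) := LinearMap.congr_fun (hf i).eq p
  ext1 u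
  funext j
  simp [hcomm]

theorem gradDiv_mul_gradDiv (hd : ∀ i j, Commute (d i) (d j)) :
    gradDiv d * gradDiv d = (laplacian d).compLeft ι * gradDiv d := by
  ext1 u
  funext j
  calc gradDiv d (gradDiv d u) j
    _ = d j (laplacian d (divergence d u)) := by
      simp only [gradDiv_apply, laplacian_apply, divergence_apply]
    _ = laplacian d (d j (divergence d u)) :=
      LinearMap.congr_fun (commute_laplacian (hd j)).eq _
    _ = laplacian d (gradDiv d u j) := by simp [-laplacian_apply]

end VectorCalculus

section LameOperator

variable {K P ι : Type*} [Field K] [AddCommGroup P] [Module K P] [Fintype ι]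
  {d : ι → Module.End K P}

/-- The spatial part `u ↦ b⁻¹ Δ u + ∇ (div u)` of the Lamé equations. -/
def lameOperator (d : ι → Module.End K P) (b : K) : Module.End K (ι → P) :=
  b⁻¹ • (laplacian d).compLeft ι + gradDiv d

theorem compLeft_commute_lameOperator {f : Module.End K P} (hf : ∀ i, Commute f (d i))
    (b : K) : Commute (f.compLeft ι) (lameOperator d b) := by
  have hlap : Commute (f.compLeft ι) ((laplacian d).compLeft ι) :=
    congrArg (LinearMap.compLeft · ι) (commute_laplacian hf).eq
  exact (hlap.smul_right _).add_right (compLeft_commute_gradDiv hf)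

theorem lameOperator_pow_succ (hd : ∀ i j, Commute (d i) (d j)) {b : K} (hb : b ≠ 0) (m : ℕ) :
    lameOperator d b ^ (m + 1) = b⁻¹ ^ (m + 1) • ((laplacian d ^ (m + 1)).compLeft ι +
      ((b + 1) ^ (m + 1) - 1) • ((laplacian d ^ m).compLeft ι * gradDiv d)) := by
  have hfactor : lameOperator d b = b⁻¹ • ((laplacian d).compLeft ι + b • gradDiv d) := by
    rw [lameOperator, smul_add, inv_smul_smul₀ hb]
  have hcomm : Commute ((laplacian d).compLeft ι) (gradDiv d) :=
    compLeft_commute_gradDiv fun i => (commute_laplacian (hd i)).symm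
  rw [hfactor, smul_pow, add_smul_pow_succ hcomm (gradDiv_mul_gradDiv hd), compLeft_pow,
    compLeft_pow]

variable [DecidableEq ι]

theorem lameOperator_pow_succ_single_apply (hd : ∀ i j, Commute (d i) (d j)) {b : K}
    (hb : b ≠ 0) (r : ι) (p : P) (m : ℕ) (j : ι) :
    (lameOperator d b ^ (m + 1)) (Pi.single r p) j =
      b⁻¹ ^ (m + 1) • ((if j = r then (laplacian d ^ (m + 1)) p else 0) +
        ((b + 1) ^ (m + 1) - 1) • (laplacian d ^ m) (d j (d r p))) := by
  have hdiv : ∑ i, d i ((Pi.single r p : ι → P) i) = d r p := by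
    rw [Finset.sum_eq_single r (fun i _ hi => by simp [hi]) (by simp), Pi.single_eq_same]
  have hsingle : (laplacian d ^ (m + 1)) ((Pi.single r p : ι → P) j) =
      if j = r then (laplacian d ^ (m + 1)) p else 0 := by
    rw [Pi.single_apply, apply_ite (laplacian d ^ (m + 1)), map_zero]
  rw [lameOperator_pow_succ hd hb, ← hsingle, ← hdiv, ← gradDiv_apply]
  rfl

theorem lameOperator_pow_succ_single_eq_zero (hd : ∀ i j, Commute (d i) (d j)) {b : K}
    (hb : b ≠ 0) (r : ι) {p : P} {N : ℕ} (hp : (laplacian d ^ N) p = 0) :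
    (lameOperator d b ^ (N + 1)) (Pi.single r p) = 0 := by
  funext j
  rw [lameOperator_pow_succ_single_apply hd hb, laplacian_pow_map hd, laplacian_pow_map hd, hp,
    pow_succ' (laplacian d), Module.End.mul_apply, hp]
  simp

end LameOperator

theorem finsum_eq_sum_range {M : Type*} [AddCommMonoid M] {f : ℕ → M} {N : ℕ}
    (hf : ∀ m, N ≤ m → f m = 0) : ∑ᶠ m, f m = ∑ m ∈ Finset.range N, f m :=
  finsum_eq_sum_of_support_subset f fun m hm => by
    simpa using not_le.1 fun hNm => hm (hf m hNm)

theorem map_pow_smul {R A M : Type*} [Semiring R] [Monoid A] [AddCommMonoid M] [Module R M]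
    [MulAction A M] {L : Module.End R M} {t : A} (hLt : ∀ w, L (t • w) = t • L w) (k : ℕ) (w : M) :
    L (t ^ k • w) = t ^ k • L w := by
  induction k with
  | zero => simp
  | succ k ih => rw [pow_succ', mul_smul, hLt, ih, mul_smul]

section CauchySeries

variable {K A M : Type*} [Field K] [Semiring A] [AddCommGroup M] [Module K M] [Module A M]
  {t : A} {D L : Module.End K M} {v : M} {ε N : ℕ}

/-- The term `t^(ε+2m)/(ε+2m)! • Lᵐ v` of the power series solution of `D² u = L u`, where `D` plays
the role of `∂/∂t`. -/
noncomputable def cauchyTerm (t : A) (L : Module.End K M) (ε : ℕ) (v : M) (m : ℕ) : M :=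
  ((ε + 2 * m).factorial : K)⁻¹ • t ^ (ε + 2 * m) • (L ^ m) v

/-- The formal solution `∑ₘ t^(ε+2m)/(ε+2m)! • Lᵐ v` of `D² u = L u`: for `ε = 0` it has initial
value `v` and initial velocity `0`, for `ε = 1` the other way round. The value is only meaningful
if `Lᵐ v = 0` for large `m`, which makes the `finsum` finite. -/
noncomputable def cauchySeries (t : A) (L : Module.End K M) (ε : ℕ) (v : M) : M :=
  ∑ᶠ m, cauchyTerm t L ε v m

theorem cauchyTerm_zero (hε : ε ≤ 1) : cauchyTerm t L ε v 0 = t ^ ε • v := by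
  interval_cases ε <;> simp [cauchyTerm]

theorem cauchySeries_eq_sum_range (hLv : (L ^ N) v = 0) :
    cauchySeries t L ε v = ∑ m ∈ Finset.range N, cauchyTerm t L ε v m :=
  finsum_eq_sum_range fun m hm => by
    rw [cauchyTerm, Module.End.pow_map_zero_of_le hm hLv, smul_zero, smul_zero]

theorem map_pow_apply_eq_zero (hDL : Commute D L) (hDv : D v = 0) (m : ℕ) :
    D ((L ^ m) v) = 0 := by
  rw [← Module.End.mul_apply, (hDL.pow_right m).eq, Module.End.mul_apply, hDv, map_zero]

theorem map_map_cauchyTerm_zero (hDt : ∀ w, D (t • w) = w + t • D w) (hε : ε ≤ 1)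
    (hDv : D v = 0) : D (D (cauchyTerm t L ε v 0)) = 0 := by
  rw [cauchyTerm_zero hε]
  interval_cases ε <;> simp [hDt, hDv]

theorem map_cauchyTerm (hLt : ∀ w, L (t • w) = t • L w) (m : ℕ) :
    L (cauchyTerm t L ε v m) =
      ((ε + 2 * m).factorial : K)⁻¹ • t ^ (ε + 2 * m) • (L ^ (m + 1)) v := by
  rw [cauchyTerm, map_smul, map_pow_smul hLt, pow_succ', Module.End.mul_apply]

variable [SMulCommClass A K M]

theorem map_pow_succ_smul_of_map_eq_zero (hDt : ∀ w, D (t • w) = w + t • D w) (hDv : D v = 0)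
    (k : ℕ) : D (t ^ (k + 1) • v) = ((k + 1 : ℕ) : K) • t ^ k • v := by
  induction k with
  | zero => simp [hDt, hDv]
  | succ k ih =>
    rw [pow_succ', mul_smul, hDt, ih, smul_comm t, ← mul_smul t, ← pow_succ', Nat.cast_succ (k + 1),
      add_smul, one_smul, add_comm]

variable [CharZero K]

theorem map_dividedPow_succ_smul (hDt : ∀ w, D (t • w) = w + t • D w) (hDv : D v = 0) (k : ℕ) :
    D (((k + 1).factorial : K)⁻¹ • t ^ (k + 1) • v) = (k.factorial : K)⁻¹ • t ^ k • v := by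
  have hk : ((k + 1 : ℕ) : K) ≠ 0 := Nat.cast_ne_zero.2 k.succ_ne_zero
  rw [map_smul, map_pow_succ_smul_of_map_eq_zero hDt hDv, smul_smul, Nat.factorial_succ,
    Nat.cast_mul, mul_inv_rev, inv_mul_cancel_right₀ hk]

theorem map_map_cauchyTerm_succ (hDt : ∀ w, D (t • w) = w + t • D w)
    (hLt : ∀ w, L (t • w) = t • L w) (hDL : Commute D L) (hDv : D v = 0) (m : ℕ) :
    D (D (cauchyTerm t L ε v (m + 1))) = L (cauchyTerm t L ε v m) := by
  have hDw : D ((L ^ (m + 1)) v) = 0 := map_pow_apply_eq_zero hDL hDv (m + 1)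
  rw [cauchyTerm, show ε + 2 * (m + 1) = ε + 2 * m + 1 + 1 by ring,
    map_dividedPow_succ_smul hDt hDw, map_dividedPow_succ_smul hDt hDw, map_cauchyTerm hLt]

theorem map_map_cauchySeries (hDt : ∀ w, D (t • w) = w + t • D w)
    (hLt : ∀ w, L (t • w) = t • L w) (hDL : Commute D L) (hε : ε ≤ 1) (hDv : D v = 0)
    (hLv : (L ^ N) v = 0) : D (D (cauchySeries t L ε v)) = L (cauchySeries t L ε v) := by
  have hLv' : (L ^ (N + 1)) v = 0 := Module.End.pow_map_zero_of_le N.le_succ hLv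
  calc D (D (cauchySeries t L ε v))
    _ = ∑ m ∈ Finset.range N, D (D (cauchyTerm t L ε v (m + 1))) := by
      rw [cauchySeries_eq_sum_range hLv', Finset.sum_range_succ', map_add, map_add,
        map_map_cauchyTerm_zero hDt hε hDv, add_zero, map_sum, map_sum]
    _ = ∑ m ∈ Finset.range N, L (cauchyTerm t L ε v m) :=
      Finset.sum_congr rfl fun m _ => map_map_cauchyTerm_succ hDt hLt hDL hDv m
    _ = L (cauchySeries t L ε v) := by rw [cauchySeries_eq_sum_range hLv, map_sum]

end CauchySeries

section Polynomial

variable {R σ ι : Type*} [CommSemiring R]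

/-- The partial derivative `∂/∂xₛ` as an `R`-linear endomorphism. -/
noncomputable def partialDeriv (s : σ) : Module.End R (MvPolynomial σ R) :=
  (pderiv s).toLinearMap

/-- The componentwise time derivative of a tuple of polynomials, where the variable `t` is the
time. -/
noncomputable def timeDeriv (t : σ) : Module.End R (ι → MvPolynomial σ R) :=
  (partialDeriv t).compLeft ι

@[simp]
theorem partialDeriv_apply (s : σ) (p : MvPolynomial σ R) : partialDeriv s p = pderiv s p :=
  rfl

@[simp]
theorem timeDeriv_apply (t : σ) (u : ι → MvPolynomial σ R) (j : ι) :
    timeDeriv t u j = pderiv t (u j) :=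
  rfl

theorem partialDeriv_commute {R : Type*} [CommRing R] (s t : σ) :
    Commute (partialDeriv s : Module.End R (MvPolynomial σ R)) (partialDeriv t) := by
  classical
  have hbracket : ⁅(pderiv s : Derivation R (MvPolynomial σ R) (MvPolynomial σ R)),
      (pderiv t : Derivation R (MvPolynomial σ R) (MvPolynomial σ R))⁆ = 0 := by
    ext1 i
    simp [Derivation.commutator_apply, Pi.single_apply, apply_ite]
  exact LinearMap.ext fun p => sub_eq_zero.1 (DFunLike.congr_fun hbracket p)

theorem mulLeft_X_commute_partialDeriv {s t : σ} (hst : s ≠ t) :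
    Commute (LinearMap.mulLeft R (X t : MvPolynomial σ R)) (partialDeriv s) :=
  LinearMap.ext fun p => by simp [pderiv_X_of_ne hst.symm]

theorem timeDeriv_X_smul (t : σ) (u : ι → MvPolynomial σ R) :
    timeDeriv t ((X t : MvPolynomial σ R) • u) = u + (X t : MvPolynomial σ R) • timeDeriv t u := by
  funext j
  simp [add_comm]

theorem X_pow_dvd_iff_coeff {t : σ} {k : ℕ} {p : MvPolynomial σ R} :
    X t ^ k ∣ p ↔ ∀ e : σ →₀ ℕ, e t < k → coeff e p = 0 := by
  have hle (e : σ →₀ ℕ) : Finsupp.single t k ≤ e ↔ k ≤ e t := Finsupp.single_le_iff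
  rw [X_pow_eq_monomial, monomial_one_dvd_iff_modMonomial_eq_zero]
  constructor
  · intro h e he
    rw [← coeff_modMonomial_of_not_le p (mt (hle e).1 he.not_ge), h, coeff_zero]
  · intro h
    ext e
    rcases lt_or_ge (e t) k with he | he
    · rw [coeff_modMonomial_of_not_le p (mt (hle e).1 he.not_ge), h e he, coeff_zero]
    · rw [coeff_modMonomial_of_le p ((hle e).2 he), coeff_zero]

theorem eq_zero_of_forall_X_pow_dvd {t : σ} {p : MvPolynomial σ R}
    (h : ∀ k, X t ^ k ∣ p) : p = 0 := by
  ext e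
  exact X_pow_dvd_iff_coeff.1 (h (e t + 1)) e (Nat.lt_succ_self _)

theorem X_pow_succ_dvd_iff [NoZeroDivisors R] [CharZero R] {t : σ} {k : ℕ}
    {p : MvPolynomial σ R} : X t ^ (k + 1) ∣ p ↔ X t ∣ p ∧ X t ^ k ∣ pderiv t p := by
  have hcoeff (e : σ →₀ ℕ) :
      coeff e (pderiv t p) = 0 ↔ coeff (e + Finsupp.single t 1) p = 0 := by
    rw [coeff_pderiv, mul_eq_zero, or_iff_left (Nat.cast_add_one_ne_zero _)]
  have hX : X t ∣ p ↔ ∀ e : σ →₀ ℕ, e t < 1 → coeff e p = 0 := by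
    rw [← X_pow_dvd_iff_coeff, pow_one]
  rw [hX, X_pow_dvd_iff_coeff, X_pow_dvd_iff_coeff]
  simp only [hcoeff]
  refine ⟨fun h => ⟨fun e he => h e (by omega), fun e he => h _ (by simpa using he)⟩, ?_⟩
  rintro ⟨hzero, hpos⟩ e he
  rcases Nat.eq_zero_or_pos (e t) with h0 | h0
  · exact hzero e (by omega)
  · have hle : Finsupp.single t 1 ≤ e := Finsupp.single_le_iff.2 h0
    rw [← tsub_add_cancel_of_le hle]
    exact hpos _ (by rw [Finsupp.tsub_apply, Finsupp.single_eq_same]; omega)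

theorem pow_dvd_apply {K A : Type*} [Semiring K] [CommSemiring A] [Module K A] {t : A}
    {L : Module.End K (ι → A)} (hLt : ∀ w, L (t • w) = t • L w) {k : ℕ} {u : ι → A}
    (hu : ∀ j, t ^ k ∣ u j) (j : ι) : t ^ k ∣ L u j := by
  choose w hw using hu
  have hu_eq : u = t ^ k • w := funext hw
  rw [hu_eq, map_pow_smul hLt]
  exact dvd_mul_right _ _

theorem eq_zero_of_timeDeriv_timeDeriv_eq [NoZeroDivisors R] [CharZero R] {t : σ}
    {L : Module.End R (ι → MvPolynomial σ R)}
    (hLt : ∀ w, L ((X t : MvPolynomial σ R) • w) = (X t : MvPolynomial σ R) • L w)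
    {u : ι → MvPolynomial σ R} (hu : timeDeriv t (timeDeriv t u) = L u)
    (hinit : ∀ j, X t ^ 2 ∣ u j) : u = 0 := by
  have hdvd (k : ℕ) : ∀ j, X t ^ (k + 2) ∣ u j := by
    induction k with
    | zero => exact hinit
    | succ k ih =>
      intro j
      obtain ⟨hX, hX'⟩ := X_pow_succ_dvd_iff.1 (hinit j)
      have hLu : X t ^ (k + 1) ∣ pderiv t (pderiv t (u j)) := by
        rw [← timeDeriv_apply t u, ← timeDeriv_apply, hu]
        exact (pow_dvd_pow _ (k + 1).le_succ).trans (pow_dvd_apply hLt ih j)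
      rw [pow_one] at hX'
      exact X_pow_succ_dvd_iff.2 ⟨hX, X_pow_succ_dvd_iff.2 ⟨hX', hLu⟩⟩
  funext j
  exact eq_zero_of_forall_X_pow_dvd fun k => (pow_dvd_pow _ (k.le_add_right 2)).trans (hdvd k j)

theorem laplacian_pow_apply_eq_zero [Fintype ι] (x : ι → σ) {N : ℕ} {p : MvPolynomial σ R}
    (hp : ∀ e : σ →₀ ℕ, N ≤ e.degree → coeff e p = 0) :
    (laplacian (fun i => partialDeriv (x i)) ^ N) p = 0 := by
  induction N generalizing p with
  | zero => ext e; simpa using hp e (Nat.zero_le _)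
  | succ N ih =>
    rw [pow_succ, Module.End.mul_apply]
    refine ih fun e he => ?_
    rw [laplacian_apply, coeff_sum]
    refine Finset.sum_eq_zero fun i _ => ?_
    rw [partialDeriv_apply, partialDeriv_apply, coeff_pderiv, coeff_pderiv, hp, zero_mul, zero_mul]
    simp only [map_add, Finsupp.degree_single]
    omega

theorem laplacian_pow_totalDegree_succ_apply [Fintype ι] (x : ι → σ) (p : MvPolynomial σ R) :
    (laplacian (fun i => partialDeriv (x i)) ^ (p.totalDegree + 1)) p = 0 :=
  laplacian_pow_apply_eq_zero x fun _ he => coeff_eq_zero_of_totalDegree_lt he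

theorem coeff_cauchySeries {K : Type*} [Field K] {t : σ} {L : Module.End K (ι → MvPolynomial σ K)}
    {ε N : ℕ} (hε : ε ≤ 1) {v : ι → MvPolynomial σ K} (hLv : (L ^ N) v = 0) {e : σ →₀ ℕ}
    (he : e t ≤ 1) (j : ι) :
    coeff e (cauchySeries (X t : MvPolynomial σ K) L ε v j) = coeff e (X t ^ ε * v j) := by
  have hterm_succ (m : ℕ) :
      coeff e (cauchyTerm (X t : MvPolynomial σ K) L ε v (m + 1) j) = 0 := by
    have hdvd : X t ^ (ε + 2 * (m + 1)) ∣ cauchyTerm (X t : MvPolynomial σ K) L ε v (m + 1) j := by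
      rw [cauchyTerm, Pi.smul_apply, Pi.smul_apply, smul_eq_mul]
      exact dvd_smul_of_dvd _ (dvd_mul_right _ _)
    exact X_pow_dvd_iff_coeff.1 hdvd e (by omega)
  rw [cauchySeries_eq_sum_range (Module.End.pow_map_zero_of_le N.le_succ hLv),
    Finset.sum_range_succ', Pi.add_apply, Finset.sum_apply, coeff_add, coeff_sum,
    Finset.sum_eq_zero fun m _ => hterm_succ m, zero_add, cauchyTerm_zero hε,
    Pi.smul_apply, smul_eq_mul]

end Polynomial

section LameSystem

variable {n : ℕ} {b : ℝ}

/-- The spatial Lamé operator on tuples of polynomials in `t = X 0` and `xᵣ = X r.succ`. -/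
noncomputable abbrev polyLameOperator (n : ℕ) (b : ℝ) :
    Module.End ℝ (Fin n → MvPolynomial (Fin (n + 1)) ℝ) :=
  lameOperator (fun r : Fin n => partialDeriv r.succ) b

theorem lapX_iterate (m : ℕ) (p : MvPolynomial (Fin (n + 1)) ℝ) :
    lapX^[m] p = (laplacian (fun r : Fin n => partialDeriv r.succ) ^ m) p := by
  have hlapX : lapX = ⇑(laplacian fun r : Fin n => partialDeriv (R := ℝ) r.succ) := by
    funext q
    simp [lapX]
  rw [hlapX, Module.End.pow_apply]

theorem isLameSol_iff {u : Fin n → MvPolynomial (Fin (n + 1)) ℝ} :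
    IsLameSol b u ↔ timeDeriv 0 (timeDeriv 0 u) = polyLameOperator n b u := by
  simp [IsLameSol, lapX, lameOperator, funext_iff]

theorem commute_timeDeriv_polyLameOperator (b : ℝ) :
    Commute (timeDeriv 0) (polyLameOperator n b) :=
  compLeft_commute_lameOperator (fun _ => partialDeriv_commute _ _) b

theorem polyLameOperator_X_smul (b : ℝ) (w : Fin n → MvPolynomial (Fin (n + 1)) ℝ) :
    polyLameOperator n b ((X 0 : MvPolynomial (Fin (n + 1)) ℝ) • w) =
      (X 0 : MvPolynomial (Fin (n + 1)) ℝ) • polyLameOperator n b w :=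
  (LinearMap.congr_fun (compLeft_commute_lameOperator
    (fun r : Fin n => mulLeft_X_commute_partialDeriv r.succ_ne_zero) b).eq w).symm

theorem polyLameOperator_pow_single_xPow (hb : b ≠ 0) (r : Fin n) (l : Fin n → ℕ) :
    (polyLameOperator n b ^ ((xPow l).totalDegree + 2)) (Pi.single r (xPow l)) = 0 :=
  lameOperator_pow_succ_single_eq_zero (fun _ _ => partialDeriv_commute _ _) hb r
    (laplacian_pow_totalDegree_succ_apply _ _)

theorem pderiv_zero_xPow (l : Fin n → ℕ) : pderiv 0 (xPow l) = 0 := by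
  refine Finset.prod_induction _ (fun p => pderiv 0 p = 0) (fun p q hp hq => ?_) pderiv_one
    fun s _ => ?_
  · rw [pderiv_mul, hp, hq, zero_mul, mul_zero, add_zero]
  · rw [pderiv_pow, pderiv_X_of_ne s.succ_ne_zero, mul_zero]

theorem cauchyTerm_polyLameOperator_succ_single_apply (hb : b ≠ 0) (ε : ℕ) (r : Fin n)
    (p : MvPolynomial (Fin (n + 1)) ℝ) (m : ℕ) (j : Fin n) :
    cauchyTerm (X 0 : MvPolynomial (Fin (n + 1)) ℝ) (polyLameOperator n b) ε (Pi.single r p)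
        (m + 1) j =
      (if j = r then (b⁻¹ ^ (m + 1) / ((ε + 2 * (m + 1)).factorial : ℝ)) •
          (X 0 ^ (ε + 2 * (m + 1)) * lapX^[m + 1] p) else 0) +
        (b⁻¹ ^ (m + 1) * ((b + 1) ^ (m + 1) - 1) / ((ε + 2 * (m + 1)).factorial : ℝ)) •
          (X 0 ^ (ε + 2 * (m + 1)) * lapX^[m] (pderiv j.succ (pderiv r.succ p))) := by
  rw [cauchyTerm, Pi.smul_apply, Pi.smul_apply,
    lameOperator_pow_succ_single_apply (fun _ _ => partialDeriv_commute _ _) hb, lapX_iterate,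
    lapX_iterate, partialDeriv_apply, partialDeriv_apply]
  split_ifs
  all_goals
    simp only [smul_eq_mul, smul_add, zero_add, mul_add, mul_smul_comm, smul_smul]
    module

theorem lapX_iterate_eq_zero {N m : ℕ} {p : MvPolynomial (Fin (n + 1)) ℝ}
    (hp : lapX^[N] p = 0) (hm : N ≤ m) : lapX^[m] p = 0 := by
  rw [lapX_iterate] at hp ⊢
  exact Module.End.pow_map_zero_of_le hm hp

theorem lapX_iterate_pderiv_succ (m : ℕ) (i : Fin n) (p : MvPolynomial (Fin (n + 1)) ℝ) :
    lapX^[m] (pderiv i.succ p) = pderiv i.succ (lapX^[m] p) := by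
  rw [lapX_iterate, lapX_iterate]
  exact laplacian_pow_map (fun _ _ => partialDeriv_commute _ _) m i p

theorem uSol_eq_cauchySeries (hb : b ≠ 0) (r : Fin n) {ε : ℕ} (hε : ε ≤ 1) (l : Fin n → ℕ) :
    uSol b r ε l = cauchySeries (X 0 : MvPolynomial (Fin (n + 1)) ℝ) (polyLameOperator n b) ε
      (Pi.single r (xPow l)) := by
  have hlap {m : ℕ} (hm : (xPow l).totalDegree + 1 ≤ m) : lapX^[m] (xPow (n := n) l) = 0 :=
    lapX_iterate_eq_zero (by rw [lapX_iterate, laplacian_pow_totalDegree_succ_apply]) hm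
  funext j
  rw [cauchySeries_eq_sum_range (polyLameOperator_pow_single_xPow hb r l),
    Finset.sum_range_succ', Pi.add_apply, Finset.sum_apply, cauchyTerm_zero hε, Pi.smul_apply]
  simp only [cauchyTerm_polyLameOperator_succ_single_apply hb]
  rw [uSol, finsum_eq_sum_range fun m hm => ?_, finsum_eq_sum_range fun m hm => ?_]
  · rw [Finset.sum_add_distrib]
    rcases eq_or_ne j r with rfl | hj
    · simp only [if_true, Pi.single_eq_same, smul_eq_mul]
      abel
    · simp [hj]
  · rw [lapX_iterate_pderiv_succ, lapX_iterate_pderiv_succ, hlap hm]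
    simp
  · rw [hlap (hm.trans m.le_succ)]
    simp

theorem isLameSol_uSol (hb : b ≠ 0) (r : Fin n) {ε : ℕ} (hε : ε ≤ 1) (l : Fin n → ℕ) :
    IsLameSol b (uSol b r ε l) := by
  have htime : timeDeriv 0 (Pi.single r (xPow l)) = 0 := by
    funext j
    rcases eq_or_ne j r with rfl | hj
    · simp [pderiv_zero_xPow]
    · simp [hj]
  rw [isLameSol_iff, uSol_eq_cauchySeries hb r hε l]
  exact map_map_cauchySeries (timeDeriv_X_smul 0) (polyLameOperator_X_smul b)
    (commute_timeDeriv_polyLameOperator b) hε htime (polyLameOperator_pow_single_xPow hb r l)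

/-- The index set of the family `u^{(r,ε,l)}`. -/
abbrev Index (n : ℕ) : Type :=
  Fin n × {ε : ℕ // ε ≤ 1} × (Fin n → ℕ)

/-- The space of polynomial solutions of the Lamé equations. -/
noncomputable def lameSolutions (n : ℕ) (b : ℝ) :
    Submodule ℝ (Fin n → MvPolynomial (Fin (n + 1)) ℝ) :=
  LinearMap.ker (timeDeriv 0 * timeDeriv 0 - polyLameOperator n b)

theorem mem_lameSolutions {u : Fin n → MvPolynomial (Fin (n + 1)) ℝ} :
    u ∈ lameSolutions n b ↔ IsLameSol b u := by
  rw [isLameSol_iff, lameSolutions, LinearMap.mem_ker, LinearMap.sub_apply, sub_eq_zero,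
    Module.End.mul_apply]

/-- The exponent of the monomial `t^ε x^l`. -/
noncomputable def cauchyExponent (ε : ℕ) (l : Fin n → ℕ) : Fin (n + 1) →₀ ℕ :=
  Finsupp.cons ε (Finsupp.equivFunOnFinite.symm l)

theorem X_pow_mul_xPow (ε : ℕ) (l : Fin n → ℕ) :
    (X 0 : MvPolynomial (Fin (n + 1)) ℝ) ^ ε * xPow l = monomial (cauchyExponent ε l) 1 := by
  rw [monomial_eq, Finsupp.prod_fintype _ _ (by simp), Fin.prod_univ_succ]
  simp [cauchyExponent, xPow]

/-- The Cauchy datum with index `(r,ε,l)`: the coefficient of `t^ε x^l` in the component `uᵣ`. -/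
noncomputable def cauchyDatum (q : Index n) :
    Module.Dual ℝ (Fin n → MvPolynomial (Fin (n + 1)) ℝ) :=
  lcoeff ℝ (cauchyExponent q.2.1.1 q.2.2) ∘ₗ LinearMap.proj q.1

theorem cauchyDatum_apply (q : Index n) (u : Fin n → MvPolynomial (Fin (n + 1)) ℝ) :
    cauchyDatum q u = coeff (cauchyExponent q.2.1.1 q.2.2) (u q.1) :=
  rfl

theorem injective_component_cauchyExponent :
    Function.Injective fun q : Index n => (q.1, cauchyExponent q.2.1.1 q.2.2) := by
  rintro ⟨r, ε, l⟩ ⟨r', ε', l'⟩ h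
  simpa [cauchyExponent, Finsupp.cons_injective2.eq_iff, Subtype.ext_iff] using h

theorem cauchyDatum_uSol (hb : b ≠ 0) (q p : Index n) :
    cauchyDatum q (uSol b p.1 p.2.1.1 p.2.2) = if p = q then 1 else 0 := by
  have hpq : p = q ↔
      p.1 = q.1 ∧ cauchyExponent p.2.1.1 p.2.2 = cauchyExponent q.2.1.1 q.2.2 :=
    injective_component_cauchyExponent.eq_iff.symm.trans Prod.ext_iff
  rw [cauchyDatum_apply, uSol_eq_cauchySeries hb _ p.2.1.2, coeff_cauchySeries p.2.1.2
    (polyLameOperator_pow_single_xPow hb p.1 p.2.2) (by simpa [cauchyExponent] using q.2.1.2)]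
  simp only [hpq]
  rcases eq_or_ne p.1 q.1 with h | h
  · simp [h, X_pow_mul_xPow, coeff_monomial]
  · simp [h, h.symm]

theorem finite_setOf_cauchyDatum_ne_zero (u : Fin n → MvPolynomial (Fin (n + 1)) ℝ) :
    {q : Index n | cauchyDatum q u ≠ 0}.Finite := by
  refine (((Set.finite_univ (α := Fin n)).prod
    (Finset.univ.biUnion fun j => (u j).support).finite_toSet).preimage
      injective_component_cauchyExponent.injOn).subset fun q hq => ?_
  simpa using ⟨q.1, hq⟩

theorem eq_zero_of_cauchyDatum_eq_zero {u : Fin n → MvPolynomial (Fin (n + 1)) ℝ}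
    (hu : IsLameSol b u) (hdatum : ∀ q, cauchyDatum q u = 0) : u = 0 := by
  refine eq_zero_of_timeDeriv_timeDeriv_eq (polyLameOperator_X_smul b) (isLameSol_iff.1 hu)
    fun j => X_pow_dvd_iff_coeff.2 fun e he => ?_
  have hcoeff := hdatum (j, ⟨e 0, Nat.le_of_lt_succ he⟩, fun s => e s.succ)
  have he_eq : cauchyExponent (e 0) (fun s => e s.succ) = e := Finsupp.cons_tail e
  rwa [cauchyDatum_apply, he_eq] at hcoeff

theorem dualBases_uSol (hb : b ≠ 0) :
    Module.DualBases
      (fun p : Index n => (⟨uSol b p.1 p.2.1.1 p.2.2,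
        mem_lameSolutions.2 (isLameSol_uSol hb p.1 p.2.1.2 p.2.2)⟩ : lameSolutions n b))
      (fun q => cauchyDatum q ∘ₗ (lameSolutions n b).subtype) where
  eval_same q := (cauchyDatum_uSol hb q q).trans (if_pos rfl)
  eval_of_ne q p hqp := (cauchyDatum_uSol hb q p).trans (if_neg hqp.symm)
  total {u w} huw := by
    refine sub_eq_zero.1 (Subtype.ext (eq_zero_of_cauchyDatum_eq_zero
      (mem_lameSolutions.1 (u - w).2) fun q => ?_))
    rw [Submodule.coe_sub, map_sub, sub_eq_zero]
    exact huw q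
  finite u := finite_setOf_cauchyDatum_ne_zero u.1

end LameSystem

end Lame

theorem lame_basis_general (n : ℕ) (b : ℝ) (hb : b ≠ 0) :
    (∀ (r : Fin n) (ε : ℕ), ε ≤ 1 → ∀ l : Fin n → ℕ, IsLameSol b (uSol b r ε l)) ∧
    LinearIndependent ℝ
      (fun p : Fin n × {ε : ℕ // ε ≤ 1} × (Fin n → ℕ) =>
        uSol b p.1 p.2.1.1 p.2.2) ∧
    (∀ u : Fin n → MvPolynomial (Fin (n + 1)) ℝ, IsLameSol b u →
      u ∈ Submodule.span ℝ
        (Set.range (fun p : Fin n × {ε : ℕ // ε ≤ 1} × (Fin n → ℕ) =>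
          uSol b p.1 p.2.1.1 p.2.2))) := by
  have hdual := Lame.dualBases_uSol (n := n) hb
  have hinj : LinearMap.ker (Lame.lameSolutions n b).subtype = ⊥ := Submodule.ker_subtype _
  have hcoe : (fun p : Lame.Index n => uSol b p.1 p.2.1.1 p.2.2) =
      (Lame.lameSolutions n b).subtype ∘ hdual.basis := by
    rw [hdual.coe_basis]; rfl
  refine ⟨fun r _ hε l => Lame.isLameSol_uSol hb r hε l, ?_, fun u hu => ?_⟩
  · exact hcoe ▸ hdual.basis.linearIndependent.map' _ hinj
  · rw [hcoe, Set.range_comp, Submodule.span_image, hdual.basis.span_eq, Submodule.map_subtype_top]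
    exact Lame.mem_lameSolutions.2 hu

/-- each `u^{(r,ε,l)}` (for `r ∈ {1,…,n}`, `ε ∈ {0,1}`, `l ∈ ℕⁿ`) is a
polynomial solution of the Lamé equations, and the whole collection is a basis of the
ℝ-vector space of polynomial solutions of the Lamé equations: it is linearly
independent and spans all polynomial solutions. -/
theorem lame_basis (n : ℕ) (hn : 3 ≤ n) (b : ℝ) (hb : b ≠ 0) (hb1 : 0 < b + 1) :
    (∀ (r : Fin n) (ε : ℕ), ε ≤ 1 → ∀ l : Fin n → ℕ, IsLameSol b (uSol b r ε l)) ∧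
    LinearIndependent ℝ
      (fun p : Fin n × {ε : ℕ // ε ≤ 1} × (Fin n → ℕ) =>
        uSol b p.1 p.2.1.1 p.2.2) ∧
    (∀ u : Fin n → MvPolynomial (Fin (n + 1)) ℝ, IsLameSol b u →
      u ∈ Submodule.span ℝ
        (Set.range (fun p : Fin n × {ε : ℕ // ε ≤ 1} × (Fin n → ℕ) =>
          uSol b p.1 p.2.1.1 p.2.2))) :=
  lame_basis_general n b hb
end
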